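/- arXiv:cs/0610003 — 3 statements merged into one kernel-verified Lean document; each statement's English description precedes it below -/
import Mathlib

section
/- There is a universal constant C such that the following holds. Let G be a finite connected simple graph on n ≥ 2 vertices with positive edge weights ω and shortest-path metric d_G, and let N = n(n−1)/2. Then there exists a finitely supported probability distribution μ over spanning trees of G such that for every ε ∈ (0,1] there is a set G(ε) of unordered pairs of distinct vertices with |G(ε)| ≥ (1−ε)·N, and for every {u,v} ∈ G(ε), writing L = 1 + ln(1/ε), the expectation satisfies E_{T∼μ}[d_T(u,v)] ≤ C·L²·(1+ln L)²·(1+ln(1+ln L))²·d_G(u,v). -/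
/-!
The bound proved here is `102400 * (1 + log (1 / ε)) ^ 2 * d_G(u, v)`; the remaining logarithmic
factors of the statement are at least `1`.

**Reduction to one tree.** By a finite minimax argument (`PST.minimax`, Hahn-Banach for the compact
convex hull of the distance vectors of all spanning trees) it suffices to find, for every
nonnegative weighting `a` of the pairs, a single spanning tree `T` with
`∑ a(u,v) d_T(u,v) ≤ ∑ a(u,v) d_G(u,v) · A · (1 + log (n / β(u,v)))²`, where `β(u,v)` is the number
of points of the ball around `u` with radius `d_G(u,v)`. This is `PST.exists_tree`. For fixed `u`,
fewer than `ε n` points, `u` included, lie on the boundary of a ball with fewer than `ε n` points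
(`PST.card_small_balls`), so for all but a proportion `ε` of the pairs `log (n / β) ≤ log (1 / ε)`.

**The tree** comes from a hierarchical petal decomposition (`PST.exists_good`). A cluster `Y` has a
root, its inner distance function `δ` to the root, and a spine: a shortest path from the root. A
petal of radius `r` is grown around the end of a shortest path, which is the spine itself if the
spine is long and a path to a farthest vertex otherwise; in the latter case the weights on the path
are halved within the petal. The petal and the rest of the cluster are treated recursively and
joined by the edge of the path that leaves the petal. The rest keeps its distances to the root
(`PST.core_sdiff`), petals absorb neighbouring sets at constant speed (`PST.petal_rch`), and the
halving keeps the tree distance to the root below `4 δ` on the cluster and below `2 δ` on the spine.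

**The radius** is chosen by a cutting lemma (`PST.general_cut`). A demand with ball `B` carries the
charge `(1 + log (|Y| / |B|))²`. When `Y` is split into `W` and `Y \ W`, an uncut demand that falls
into the part `S` lowers its charge by at least `2 f + f²`, `f = log (|Y| / |S|)`, and a cut demand
releases its whole charge. Some radius makes the total of what is released pay for the cut demands,
each of which costs at most `8 Δ`, with `Δ` the radius of the cluster. As charges only drop, the
total cost is bounded by the initial charges.
-/

/-- The shortest-path (pseudo)distance of a weighted graph: the infimum of the
total `ω`-weight over all walks from `u` to `v`. -/
noncomputable def spDist {V : Type*} (G : SimpleGraph V) (ω : Sym2 V → ℝ)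
    (u v : V) : ℝ :=
  sInf {x : ℝ | ∃ p : G.Walk u v, x = (p.edges.map ω).sum}

namespace PST

/-! ### Walks inside a vertex set -/

/-- `Rch G w Y a z s`: there is a walk of `G` from `a` to `z`, all of whose vertices lie in `Y`, of
total `w`-weight exactly `s`. -/
inductive Rch {V : Type} (G : SimpleGraph V) (w : V → V → ℝ) (Y : Set V) (a : V) : V → ℝ → Prop
  | refl : a ∈ Y → Rch G w Y a a 0
  | step {u v : V} {s : ℝ} : Rch G w Y a u s → G.Adj u v → v ∈ Y → Rch G w Y a v (s + w u v)

namespace Rch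

variable {V : Type} {G : SimpleGraph V} {w : V → V → ℝ} {Y : Set V} {a b z : V} {s s' : ℝ}

lemma mem_left (h : Rch G w Y a z s) : a ∈ Y := by
  induction h with
  | refl h => exact h
  | step _ _ _ ih => exact ih

lemma mem_right (h : Rch G w Y a z s) : z ∈ Y := by
  cases h with
  | refl h => exact h
  | step _ _ h => exact h

lemma trans (h : Rch G w Y a b s) (h' : Rch G w Y b z s') : Rch G w Y a z (s + s') := by
  induction h' with
  | refl _ => simpa using h
  | step _ hadj hv ih => rw [← add_assoc]; exact ih.step hadj hv

lemma single (ha : a ∈ Y) (hz : z ∈ Y) (h : G.Adj a z) : Rch G w Y a z (w a z) := by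
  simpa using (Rch.refl (G := G) (w := w) ha).step h hz

lemma symm (hw : ∀ u v, w u v = w v u) (h : Rch G w Y a z s) : Rch G w Y z a s := by
  induction h with
  | refl h => exact .refl h
  | step h hadj hv ih =>
    have := (single (w := w) hv h.mem_right hadj.symm).trans ih
    rwa [hw, add_comm] at this

lemma mono {G' : SimpleGraph V} {Y' : Set V} (hG : ∀ u v, G.Adj u v → G'.Adj u v) (hY : Y ⊆ Y')
    (h : Rch G w Y a z s) : Rch G' w Y' a z s := by
  induction h with
  | refl h => exact .refl (hY h)
  | step _ hadj hv ih => exact ih.step (hG _ _ hadj) (hY hv)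

lemma lower_weight {w' : V → V → ℝ} (hw : ∀ u v, G.Adj u v → w' u v ≤ w u v)
    (h : Rch G w Y a z s) : ∃ s' ≤ s, Rch G w' Y a z s' := by
  induction h with
  | refl h => exact ⟨0, le_rfl, .refl h⟩
  | step _ hadj hv ih =>
    obtain ⟨s', hs, hr⟩ := ih
    exact ⟨_, add_le_add hs (hw _ _ hadj), hr.step hadj hv⟩

/-- A potential that grows by at most `w` along edges grows by at most the length of a walk. -/
lemma lip {g : V → ℝ} (hg : ∀ u v, u ∈ Y → v ∈ Y → G.Adj u v → g v ≤ g u + w u v)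
    (h : Rch G w Y a z s) : g z ≤ g a + s := by
  induction h with
  | refl h => simp
  | step h hadj hv ih => linarith [hg _ _ h.mem_right hv hadj]

end Rch

/-! ### Distances to the root of a cluster -/

/-- `Core G w Y x₀ δ`: the function `δ` is, on `Y`, the distance from `x₀` inside the induced
subgraph `G[Y]` with edge weights `w`. This is encoded locally: `δ` vanishes at the root, is
`1`-Lipschitz along edges, and every other vertex has a neighbour through which it is tight. -/
structure Core {V : Type} (G : SimpleGraph V) (w : V → V → ℝ) (Y : Finset V) (x₀ : V)
    (δ : V → ℝ) : Prop where
  mem : x₀ ∈ Y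
  zero : δ x₀ = 0
  lip : ∀ u v, u ∈ Y → v ∈ Y → G.Adj u v → δ v ≤ δ u + w u v
  tight : ∀ z ∈ Y, z ≠ x₀ → ∃ u ∈ Y, G.Adj u z ∧ δ z = δ u + w u z
  pos : ∀ u v, G.Adj u v → 0 < w u v
  symm : ∀ u v, w u v = w v u

namespace Core

variable {V : Type} {G : SimpleGraph V} {w : V → V → ℝ} {Y : Finset V} {x₀ : V} {δ : V → ℝ}

/-- Induction along the values of `δ` on a finite set. -/
lemma induct (δ : V → ℝ) (Y : Finset V) (C : V → Prop)
    (h : ∀ z ∈ Y, (∀ u ∈ Y, δ u < δ z → C u) → C z) : ∀ z ∈ Y, C z := by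
  classical
  by_contra! hcon
  obtain ⟨z, hz, hCz⟩ := hcon
  obtain ⟨m, hm, hmin⟩ := Finset.exists_min_image (Y.filter fun z => ¬ C z) δ
    ⟨z, by simp [hz, hCz]⟩
  simp only [Finset.mem_filter] at hm hmin
  refine hm.2 (h m hm.1 fun u hu hlt => ?_)
  by_contra hCu
  exact absurd (hmin u ⟨hu, hCu⟩) (not_le.2 hlt)

lemma pos_of_ne (h : Core G w Y x₀ δ) : ∀ z ∈ Y, z ≠ x₀ → 0 < δ z := by
  refine induct δ Y _ fun z hz ih hne => ?_
  obtain ⟨u, hu, hadj, he⟩ := h.tight z hz hne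
  have hw := h.pos _ _ hadj
  by_cases hux : u = x₀
  · subst hux; rw [he, h.zero]; linarith
  · linarith [ih u hu (by linarith) hux]

lemma nonneg (h : Core G w Y x₀ δ) {z : V} (hz : z ∈ Y) : 0 ≤ δ z := by
  by_cases hx : z = x₀
  · rw [hx, h.zero]
  · exact (h.pos_of_ne z hz hx).le

/-- The distance is realised by a walk that stays in any sublevel set containing its end point. -/
lemma rch_ball (h : Core G w Y x₀ δ) (d : ℝ) :
    ∀ z ∈ Y, δ z ≤ d → Rch G w {v | v ∈ Y ∧ δ v ≤ d} x₀ z (δ z) := by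
  refine induct δ Y _ fun z hz ih hd => ?_
  by_cases hx : z = x₀
  · subst hx; rw [h.zero]
    exact .refl ⟨hz, hd⟩
  · obtain ⟨u, hu, hadj, he⟩ := h.tight z hz hx
    have hw := h.pos _ _ hadj
    rw [he]
    exact (ih u hu (by linarith) (by linarith)).step hadj ⟨hz, hd⟩

end Core

/-- Shortest-path distances exist in a connected cluster, and are the greatest lower bounds of
lengths of walks. -/
lemma exists_core {V : Type} {G : SimpleGraph V} {w : V → V → ℝ} {Y : Finset V} {x : V}
    (hx : x ∈ Y) (hpos : ∀ u v, G.Adj u v → 0 < w u v) (hsymm : ∀ u v, w u v = w v u)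
    (hconn : ∀ z ∈ Y, ∃ s, Rch G w Y x z s) :
    ∃ δ : V → ℝ, Core G w Y x δ ∧
      ∀ z ∈ Y, ∀ b, (∀ s, Rch G w Y x z s → b ≤ s) → b ≤ δ z := by
  classical
  have hnn : ∀ z s, Rch G w Y x z s → 0 ≤ s := by
    intro z s h
    have := h.lip (g := fun _ => 0) (fun u v _ _ hadj => by simpa using (hpos u v hadj).le)
    simpa using this
  let δ : V → ℝ := fun z => sInf {s | Rch G w Y x z s}
  have hbdd : ∀ z, BddBelow {s | Rch G w Y x z s} := fun z => ⟨0, fun s hs => hnn z s hs⟩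
  have hle : ∀ z s, Rch G w Y x z s → δ z ≤ s := fun z s hs => csInf_le (hbdd z) hs
  have hge : ∀ z ∈ Y, ∀ b, (∀ s, Rch G w Y x z s → b ≤ s) → b ≤ δ z := fun z hz b hb =>
    le_csInf (hconn z hz) hb
  have hlip : ∀ u v, u ∈ Y → v ∈ Y → G.Adj u v → δ v ≤ δ u + w u v := by
    intro u v hu hv hadj
    have : δ v - w u v ≤ δ u := hge u hu _ fun s hs => by
      linarith [hle v _ (hs.step hadj hv)]
    linarith
  have hzero : δ x = 0 := le_antisymm (hle x 0 (.refl hx)) (hge x hx 0 fun s hs => hnn x s hs)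
  refine ⟨δ, ⟨hx, hzero, hlip, ?_, hpos, hsymm⟩, hge⟩
  intro z hz hne
  -- every walk ending at `z` has a last edge, so the infimum is a minimum over neighbours
  have key : ∀ s, Rch G w Y x z s → ∃ u ∈ Y, G.Adj u z ∧ δ u + w u z ≤ s := by
    intro s hs
    cases hs with
    | refl h => exact absurd rfl hne
    | step h hadj hv => exact ⟨_, h.mem_right, hadj, by linarith [hle _ _ h]⟩
  obtain ⟨s₀, hs₀⟩ := hconn z hz
  obtain ⟨u₀, hu₀, hadj₀, -⟩ := key s₀ hs₀
  obtain ⟨m, hm, hmin⟩ := Finset.exists_min_image (Y.filter fun u => G.Adj u z)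
    (fun u => δ u + w u z) ⟨u₀, by simp [hu₀, hadj₀]⟩
  simp only [Finset.mem_filter] at hm hmin
  refine ⟨m, hm.1, hm.2, le_antisymm (hlip _ _ hm.1 hz hm.2) (hge z hz _ fun s hs => ?_)⟩
  obtain ⟨u, hu, hadj, hus⟩ := key s hs
  exact (hmin u ⟨hu, hadj⟩).trans hus

/-- `Spine G w δ x₀ t P`: the vertex set `P` is that of a path from the root `x₀` to `t` along
which the distance `δ` is tight; each vertex of `P` other than `x₀` is joined to the vertex of `P`
that comes just before it in the order given by `δ`. -/
structure Spine {V : Type} (G : SimpleGraph V) (w : V → V → ℝ) (δ : V → ℝ) (x₀ t : V)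
    (P : Finset V) : Prop where
  root : x₀ ∈ P
  top : t ∈ P
  le : ∀ q ∈ P, δ q ≤ δ t
  inj : ∀ p ∈ P, ∀ q ∈ P, δ p = δ q → p = q
  pred : ∀ q ∈ P, q ≠ x₀ → ∃ u ∈ P, G.Adj u q ∧ δ q = δ u + w u q ∧
    ∀ q' ∈ P, δ q' < δ q → δ q' ≤ δ u

lemma Core.exists_spine {V : Type} {G : SimpleGraph V} {w : V → V → ℝ} {Y : Finset V} {x₀ : V}
    {δ : V → ℝ} (h : Core G w Y x₀ δ) :
    ∀ t ∈ Y, ∃ P ⊆ Y, Spine G w δ x₀ t P := by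
  classical
  refine Core.induct δ Y _ fun z hz ih => ?_
  by_cases hx : z = x₀
  · subst hx
    exact ⟨{z}, by simpa using hz, by simp, by simp, by simp, by simp, by simp⟩
  obtain ⟨u, hu, hadj, he⟩ := h.tight z hz hx
  have hw := h.pos _ _ hadj
  obtain ⟨P, hPY, hP⟩ := ih u hu (by linarith)
  have hlt : ∀ q ∈ P, δ q < δ z := fun q hq => by linarith [hP.le q hq]
  refine ⟨insert z P, Finset.insert_subset hz hPY, ?_, ?_, ?_, ?_, ?_⟩
  · exact Finset.mem_insert_of_mem hP.root
  · exact Finset.mem_insert_self _ _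
  · intro q hq
    rcases Finset.mem_insert.1 hq with rfl | hq
    · exact le_rfl
    · exact (hlt q hq).le
  · intro p hp q hq hpq
    rcases Finset.mem_insert.1 hp with h₁ | h₁ <;> rcases Finset.mem_insert.1 hq with h₂ | h₂
    · rw [h₁, h₂]
    · subst h₁; linarith [hlt q h₂]
    · subst h₂; linarith [hlt p h₁]
    · exact hP.inj p h₁ q h₂ hpq
  · intro q hq hqx
    rcases Finset.mem_insert.1 hq with rfl | hqP
    · refine ⟨u, Finset.mem_insert_of_mem hP.top, hadj, he, fun q' hq' hl => ?_⟩
      rcases Finset.mem_insert.1 hq' with rfl | hq'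
      · exact absurd hl (lt_irrefl _)
      · exact hP.le q' hq'
    · obtain ⟨u', hu', ha', he', hm'⟩ := hP.pred q hqP hqx
      refine ⟨u', Finset.mem_insert_of_mem hu', ha', he', fun q' hq' hl => ?_⟩
      rcases Finset.mem_insert.1 hq' with h₁ | hq'
      · subst h₁; linarith [hlt q hqP]
      · exact hm' q' hq' hl

/-! ### Petals -/

open Classical in
/-- The petal of radius `r` around the end `t` of a spine `P`: the union over the vertices `p` of
`P` of the cones `{z | d(p,z) - (δ z - δ p) ≤ (r - (δ t - δ p)) / 2}`, where `d` is the distance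
inside `G[Y]` and `δ` is the distance from the root. -/
noncomputable def petal {V : Type} (G : SimpleGraph V) (w : V → V → ℝ) (Y : Finset V) (δ : V → ℝ)
    (P : Finset V) (t : V) (r : ℝ) : Finset V :=
  Y.filter fun z => ∃ p ∈ P, ∃ l, Rch G w Y p z l ∧ δ t + δ p + 2 * l - 2 * δ z ≤ r

section Petal

variable {V : Type} {G : SimpleGraph V} {w : V → V → ℝ} {Y : Finset V} {x₀ : V} {δ : V → ℝ}
  {P : Finset V} {t : V}

lemma mem_petal {r : ℝ} {z : V} : z ∈ petal G w Y δ P t r ↔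
    z ∈ Y ∧ ∃ p ∈ P, ∃ l, Rch G w Y p z l ∧ δ t + δ p + 2 * l - 2 * δ z ≤ r := by
  simp [petal]

lemma petal_subset (r : ℝ) : petal G w Y δ P t r ⊆ Y := fun _ h => (mem_petal.1 h).1

lemma petal_mono {r r' : ℝ} (h : r ≤ r') : petal G w Y δ P t r ⊆ petal G w Y δ P t r' := by
  intro z hz
  obtain ⟨hz, p, hp, l, hl, hr⟩ := mem_petal.1 hz
  exact mem_petal.2 ⟨hz, p, hp, l, hl, hr.trans h⟩

lemma spine_mem_petal (hPY : P ⊆ Y) {r : ℝ} {p : V} (hp : p ∈ P) (h : δ t - r ≤ δ p) :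
    p ∈ petal G w Y δ P t r :=
  mem_petal.2 ⟨hPY hp, p, hp, 0, .refl (hPY hp), by linarith⟩

lemma petal_low (hc : Core G w Y x₀ δ) {r : ℝ} {z : V}
    (hz : z ∈ petal G w Y δ P t r) : δ t - r ≤ δ z := by
  obtain ⟨hz, p, hp, l, hl, hr⟩ := mem_petal.1 hz
  have h1 := hl.lip (g := δ) hc.lip
  have h2 := (hl.symm hc.symm).lip (g := δ) hc.lip
  have h3 := hc.nonneg hz
  linarith

lemma petal_step {r : ℝ} {z z' : V} (hc : Core G w Y x₀ δ) (hz : z ∈ petal G w Y δ P t r)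
    (hz' : z' ∈ Y) (hadj : G.Adj z z') : z' ∈ petal G w Y δ P t (r + 4 * w z z') := by
  obtain ⟨hz, p, hp, l, hl, hr⟩ := mem_petal.1 hz
  refine mem_petal.2 ⟨hz', p, hp, _, hl.step hadj hz', ?_⟩
  have := hc.lip z' z hz' hz hadj.symm
  rw [hc.symm] at this
  linarith

lemma petal_tight {r : ℝ} {z z' : V} (hz : z ∈ petal G w Y δ P t r)
    (hz' : z' ∈ Y) (hadj : G.Adj z z') (he : δ z' = δ z + w z z') :
    z' ∈ petal G w Y δ P t r := by
  obtain ⟨hz, p, hp, l, hl, hr⟩ := mem_petal.1 hz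
  exact mem_petal.2 ⟨hz', p, hp, _, hl.step hadj hz', by linarith⟩

/-- Petals grow at speed at least `1/4`: a set joined to the petal of radius `r` by a walk of length
`s` is absorbed once the radius reaches `r + 4 s`. -/
lemma petal_rch {W : V → V → ℝ} (hW : ∀ u v, G.Adj u v → w u v ≤ W u v)
    (hc : Core G w Y x₀ δ) {r s : ℝ} {B : Set V} (hB : B ⊆ Y) {z z' : V}
    (hz : z ∈ petal G w Y δ P t r) (h : Rch G W B z z' s) :
    z' ∈ petal G w Y δ P t (r + 4 * s) := by
  induction h with
  | refl _ => simpa using hz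
  | step h hadj hv ih =>
    exact petal_mono (by linarith [hW _ _ hadj]) (petal_step hc ih (hB hv) hadj)

lemma petal_inside (hc : Core G w Y x₀ δ) {r l : ℝ} {p z : V} (hp : p ∈ P)
    (h : Rch G w Y p z l) (hr : δ t + δ p + 2 * l - 2 * δ z ≤ r) :
    Rch G w (petal G w Y δ P t r) p z l := by
  induction h with
  | refl h => exact .refl (mem_petal.2 ⟨h, p, hp, 0, .refl h, hr⟩)
  | step h hadj hv ih =>
    refine (ih ?_).step hadj (mem_petal.2 ⟨hv, p, hp, _, h.step hadj hv, hr⟩)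
    linarith [hc.lip _ _ h.mem_right hv hadj]

/-- Removing a petal leaves all distances to the root unchanged. -/
lemma core_sdiff [DecidableEq V] (hc : Core G w Y x₀ δ) {r : ℝ} (hr : r < δ t) :
    Core G w (Y \ petal G w Y δ P t r) x₀ δ where
  mem := by
    refine Finset.mem_sdiff.2 ⟨hc.mem, fun h => ?_⟩
    have := petal_low hc h
    rw [hc.zero] at this
    linarith
  zero := hc.zero
  lip u v hu hv := hc.lip u v (Finset.mem_sdiff.1 hu).1 (Finset.mem_sdiff.1 hv).1
  tight z hz hne := by
    obtain ⟨hz, hz'⟩ := Finset.mem_sdiff.1 hz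
    obtain ⟨u, hu, hadj, he⟩ := hc.tight z hz hne
    exact ⟨u, Finset.mem_sdiff.2 ⟨hu, fun h => hz' (petal_tight h hz hadj he)⟩, hadj, he⟩
  pos := hc.pos
  symm := hc.symm

open Classical in
/-- The weights used inside a petal: edges joining two vertices of its spine are scaled by `c`. -/
noncomputable def scaleOn (P : Finset V) (c : ℝ) (w : V → V → ℝ) (u v : V) : ℝ :=
  if u ∈ P ∧ v ∈ P then c * w u v else w u v

/-- The structure of a petal, as a cluster of its own with weights scaled by `c` on its spine. -/
lemma petal_cluster [DecidableEq V] (hc : Core G w Y x₀ δ) (hP : Spine G w δ x₀ t P)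
    (hPY : P ⊆ Y) {r c : ℝ} (hr0 : 0 ≤ r) (hr : r < δ t) (hc0 : 0 < c) (hc1 : c ≤ 1) :
    ∃ x y, x ∈ P ∧ x ∈ petal G w Y δ P t r ∧ y ∈ P ∧ y ∉ petal G w Y δ P t r ∧ G.Adj y x ∧
      δ x = δ y + w y x ∧ δ y < δ t - r ∧ (∀ q ∈ P, δ q < δ x → δ q ≤ δ y) ∧
      (∀ q ∈ P, q ∈ petal G w Y δ P t r → δ x ≤ δ q) ∧
      (∀ q ∈ P, q ∉ petal G w Y δ P t r → δ q < δ x) ∧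
      ∃ δ', Core G (scaleOn P c w) (petal G w Y δ P t r) x δ' ∧
        Spine G (scaleOn P c w) δ' x t (P ∩ petal G w Y δ P t r) ∧
        (∀ q ∈ P, q ∈ petal G w Y δ P t r → δ' q = c * (δ q - δ x)) ∧
        ∀ z ∈ petal G w Y δ P t r, ∃ p ∈ P,
          δ' z ≤ c * (δ p - δ x) + (r - δ t - δ p) / 2 + δ z := by
  set W := petal G w Y δ P t r with hWdef
  have hmemW : ∀ q ∈ P, q ∈ W ↔ δ t - r ≤ δ q := fun q hq =>
    ⟨fun h => petal_low hc h, fun h => spine_mem_petal hPY hq h⟩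
  have htW : t ∈ W := (hmemW t hP.top).2 (by linarith)
  obtain ⟨x, hx, hxmin⟩ := Finset.exists_min_image (P ∩ W) δ
    ⟨t, Finset.mem_inter.2 ⟨hP.top, htW⟩⟩
  obtain ⟨hxP, hxW⟩ := Finset.mem_inter.1 hx
  have hxlow := (hmemW x hxP).1 hxW
  have hx0 : x ≠ x₀ := by
    rintro rfl
    rw [hc.zero] at hxlow; linarith
  obtain ⟨y, hyP, hadj, he, hpred⟩ := hP.pred x hxP hx0
  have hwyx := hc.pos _ _ hadj
  have hyW : y ∉ W := fun h => by
    have := hxmin y (Finset.mem_inter.2 ⟨hyP, h⟩)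
    linarith
  have hylow : δ y < δ t - r := not_le.1 fun h => hyW ((hmemW y hyP).2 h)
  have hxle : ∀ q ∈ P, q ∈ W → δ x ≤ δ q := fun q hq hqW => hxmin q (Finset.mem_inter.2 ⟨hq, hqW⟩)
  have hxlt : ∀ q ∈ P, q ∉ W → δ q < δ x := fun q hq hqW =>
    lt_of_lt_of_le (not_le.1 fun h => hqW ((hmemW q hq).2 h)) hxlow
  have hpos' : ∀ u v, G.Adj u v → 0 < scaleOn P c w u v := by
    intro u v h
    have := hc.pos u v h
    unfold scaleOn; split_ifs <;> positivity
  have hsymm' : ∀ u v, scaleOn P c w u v = scaleOn P c w v u := by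
    intro u v
    simp only [scaleOn, hc.symm u v, and_comm]
  have hle' : ∀ u v, G.Adj u v → scaleOn P c w u v ≤ w u v := by
    intro u v h
    have := hc.pos u v h
    unfold scaleOn; split_ifs
    · nlinarith
    · exact le_rfl
  have hge' : ∀ u v, G.Adj u v → c * w u v ≤ scaleOn P c w u v := by
    intro u v h
    have := hc.pos u v h
    unfold scaleOn; split_ifs
    · exact le_rfl
    · nlinarith
  -- the spine inside the petal is a walk from `x` of `c`-scaled length
  have hspine : ∀ p ∈ P, p ∈ W → Rch G (scaleOn P c w) W x p (c * (δ p - δ x)) := by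
    refine Core.induct δ P _ fun p hp ih hpW => ?_
    by_cases hpx : p = x
    · subst hpx; simpa using Rch.refl (G := G) (w := scaleOn P c w) (Y := (W : Set V)) hpW
    have hlt : δ x < δ p := lt_of_le_of_ne (hxle p hp hpW) fun h => hpx (hP.inj _ hp _ hxP h.symm)
    have hp0 : p ≠ x₀ := by
      rintro rfl
      have := hc.nonneg (hPY hxP)
      rw [hc.zero] at hlt; linarith
    obtain ⟨u, hu, ha, hue, hup⟩ := hP.pred p hp hp0
    have hxu := hup x hxP hlt
    have huW : u ∈ W := (hmemW u hu).2 (hxlow.trans hxu)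
    have hwp := hc.pos _ _ ha
    have := (ih u hu (by linarith) huW).step ha (show p ∈ (W : Set V) from hpW)
    convert this using 1
    simp only [scaleOn, hu, hp, and_self, if_true]
    rw [hue]; ring
  have hreach : ∀ z ∈ W, ∃ p ∈ P, ∃ s, Rch G (scaleOn P c w) W x z s ∧
      s ≤ c * (δ p - δ x) + (r - δ t - δ p) / 2 + δ z := by
    intro z hz
    obtain ⟨hzY, p, hp, l, hl, hlr⟩ := mem_petal.1 hz
    have hin := petal_inside hc hp hl hlr
    have hpW : p ∈ W := hin.mem_left
    obtain ⟨s, hs, hR⟩ := hin.lower_weight hle'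
    exact ⟨p, hp, _, (hspine p hp hpW).trans hR, by linarith⟩
  obtain ⟨δ', hcore, hglb⟩ := exists_core (Y := W) hxW hpos' hsymm' (fun z hz => by
    obtain ⟨_, _, s, hs, _⟩ := hreach z hz
    exact ⟨s, hs⟩)
  have hub : ∀ z s, Rch G (scaleOn P c w) W x z s → δ' z ≤ s := fun z s hs => by
    have := hs.lip (g := δ') hcore.lip
    rwa [hcore.zero, zero_add] at this
  have heq : ∀ q ∈ P, q ∈ W → δ' q = c * (δ q - δ x) := fun q hq hqW =>
    le_antisymm (hub q _ (hspine q hq hqW)) (hglb q hqW _ fun s hs => by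
      have := hs.lip (g := fun v => c * δ v) fun u v hu hv ha => by
        have h1 := hc.lip u v (petal_subset r hu) (petal_subset r hv) ha
        have h2 := hge' u v ha
        nlinarith
      linarith)
  refine ⟨x, y, hxP, hxW, hyP, hyW, hadj, he, hylow, hpred, hxle, hxlt, δ', hcore, ?_, heq, ?_⟩
  · refine ⟨hx, Finset.mem_inter.2 ⟨hP.top, htW⟩, ?_, ?_, ?_⟩
    · intro q hq
      obtain ⟨hqP, hqW⟩ := Finset.mem_inter.1 hq
      rw [heq q hqP hqW, heq t hP.top htW]
      have := hP.le q hqP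
      gcongr
    · intro p hp q hq h
      obtain ⟨hpP, hpW⟩ := Finset.mem_inter.1 hp
      obtain ⟨hqP, hqW⟩ := Finset.mem_inter.1 hq
      rw [heq p hpP hpW, heq q hqP hqW] at h
      exact hP.inj p hpP q hqP (by linarith [mul_left_cancel₀ hc0.ne' h])
    · intro p hp hpx
      obtain ⟨hpP, hpW⟩ := Finset.mem_inter.1 hp
      have hlt : δ x < δ p :=
        lt_of_le_of_ne (hxle p hpP hpW) fun h => hpx (hP.inj _ hpP _ hxP h.symm)
      have hp0 : p ≠ x₀ := by
        rintro rfl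
        have := hc.nonneg (hPY hxP)
        rw [hc.zero] at hlt; linarith
      obtain ⟨u, hu, ha, hue, hup⟩ := hP.pred p hpP hp0
      have hxu := hup x hxP hlt
      have huW : u ∈ W := (hmemW u hu).2 (hxlow.trans hxu)
      refine ⟨u, Finset.mem_inter.2 ⟨hu, huW⟩, ha, ?_, ?_⟩
      · rw [heq p hpP hpW, heq u hu huW]
        simp only [scaleOn, hu, hpP, and_self, if_true]
        rw [hue]; ring
      · intro q hq hlt'
        obtain ⟨hqP, hqW⟩ := Finset.mem_inter.1 hq
        rw [heq p hpP hpW, heq q hqP hqW] at hlt'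
        rw [heq u hu huW, heq q hqP hqW]
        have h3 : δ q < δ p := by
          have := lt_of_mul_lt_mul_left hlt' hc0.le
          linarith
        have := hup q hqP h3
        gcongr
  · intro z hz
    obtain ⟨p, hp, s, hs, hle⟩ := hreach z hz
    exact ⟨p, hp, (hub z s hs).trans hle⟩

end Petal

/-! ### Cutting a growing family of sets -/

/-- A discrete exponential-clock estimate. The property `t` is monotone, and `C` holds at no more
than `K` indices, counted from the first one satisfying `t`. Under the weights `q ^ i` the mass of
`C` is at most `K` times the weight `q ^ i₀` of that first index, and `q ^ i₀` is `1 - q` times the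
mass of `t` plus the truncation error `q ^ m`. -/
lemma geo_cut (t C : ℕ → Prop) [DecidablePred t] [DecidablePred C]
    (ht : ∀ i j, i ≤ j → t i → t j) (hCt : ∀ i, C i → t i) (K : ℕ)
    (hK : ∀ i j, t i → i + K ≤ j → ¬ C j) {q : ℝ} (hq0 : 0 ≤ q) (hq1 : q ≤ 1) (m : ℕ) :
    ∑ i ∈ Finset.range m, (if C i then q ^ i else 0) ≤
      K * ((1 - q) * ∑ i ∈ Finset.range m, (if t i then q ^ i else 0) + q ^ m) := by
  have hgeo : ∀ n j : ℕ, (1 - q) * ∑ i ∈ Finset.Ico j (j + n), q ^ i + q ^ (j + n) = q ^ j := by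
    intro n j
    induction n with
    | zero => simp
    | succ n ih =>
      rw [← add_assoc, Finset.sum_Ico_succ_top (by omega), mul_add, ← ih, pow_succ]
      ring
  by_cases h : ∃ i, i < m ∧ t i
  · classical
    obtain ⟨hm, hti⟩ := Nat.find_spec h
    set i₀ := Nat.find h
    have hmin : ∀ i, i < m → t i → i₀ ≤ i := fun i hi hti => Nat.find_min' h ⟨hi, hti⟩
    have hT : ∑ i ∈ Finset.range m, (if t i then q ^ i else 0) = ∑ i ∈ Finset.Ico i₀ m, q ^ i := by
      rw [← Finset.sum_filter]
      refine Finset.sum_congr ?_ fun _ _ => rfl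
      ext i
      simp only [Finset.mem_filter, Finset.mem_range, Finset.mem_Ico]
      exact ⟨fun h => ⟨hmin i h.1 h.2, h.1⟩, fun h => ⟨h.2, ht _ _ h.1 hti⟩⟩
    have hC : ∑ i ∈ Finset.range m, (if C i then q ^ i else 0) ≤ K * q ^ i₀ := by
      rw [← Finset.sum_filter]
      calc _ ≤ ∑ i ∈ Finset.Ico i₀ (i₀ + K), q ^ i := by
            refine Finset.sum_le_sum_of_subset_of_nonneg ?_ fun i _ _ => pow_nonneg hq0 i
            intro i hi
            simp only [Finset.mem_filter, Finset.mem_range, Finset.mem_Ico] at hi ⊢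
            exact ⟨hmin i hi.1 (hCt i hi.2), not_le.1 fun h => hK _ _ hti h hi.2⟩
        _ ≤ ∑ i ∈ Finset.Ico i₀ (i₀ + K), q ^ i₀ := Finset.sum_le_sum fun i hi =>
            pow_le_pow_of_le_one hq0 hq1 (Finset.mem_Ico.1 hi).1
        _ = _ := by simp
    have := hgeo (m - i₀) i₀
    rw [Nat.add_sub_cancel' hm.le] at this
    rw [hT, this]
    exact hC
  · push Not at h
    rw [Finset.sum_eq_zero (s := Finset.range m) (f := fun i => if C i then q ^ i else 0)]
    · have : 0 ≤ ∑ i ∈ Finset.range m, (if t i then q ^ i else 0) :=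
        Finset.sum_nonneg fun i _ => by split_ifs <;> positivity
      have h1 : 0 ≤ 1 - q := by linarith
      positivity
    · intro i hi
      rw [if_neg fun hc => h i (Finset.mem_range.1 hi) (hCt i hc)]

section LogRatio

variable {V : Type}

/-- The logarithm of the inverse of the proportion of `Y` taken by `S`. -/
noncomputable def lr (Y S : Finset V) : ℝ := Real.log ((Y.card : ℝ) / S.card)

lemma lr_nonneg {Y S : Finset V} (hS : S ⊆ Y) : 0 ≤ lr Y S := by
  rcases S.eq_empty_or_nonempty with rfl | hne
  · simp [lr]
  · refine Real.log_nonneg ?_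
    have h1 : (0 : ℝ) < S.card := by exact_mod_cast hne.card_pos
    rw [le_div_iff₀ h1, one_mul]
    exact_mod_cast Finset.card_le_card hS

lemma lr_anti {Y S S' : Finset V} (hS : S ⊆ S') (hne : S.Nonempty) (hY : S' ⊆ Y) :
    lr Y S' ≤ lr Y S := by
  have h1 : (0 : ℝ) < S.card := by exact_mod_cast hne.card_pos
  have h2 : (S.card : ℝ) ≤ S'.card := by exact_mod_cast Finset.card_le_card hS
  have h3 : (0 : ℝ) < Y.card := by exact_mod_cast ((hne.mono hS).mono hY).card_pos
  unfold lr
  exact Real.log_le_log (div_pos h3 (h1.trans_le h2)) (by gcongr)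

end LogRatio

section Window

variable {V ι : Type} [DecidableEq V]

/-- `Cut B W`: the set `B` is split by `W`. -/
def Cut (B W : Finset V) : Prop := ¬ B ⊆ W ∧ ¬ Disjoint B W

instance (B W : Finset V) : Decidable (Cut B W) := by unfold Cut; infer_instance

/-- Some radius in a window of length `len` cuts no more than a truncated exponential radius of rate
`Λ / len` does on average: the cut mass is paid by the demands that the growing set has touched, up
to a truncation error of relative size `exp (-Λ)`. -/
lemma window_cut {W : ℝ → Finset V} (hW : Monotone W) {a len Λ : ℝ} (hlen : 0 < len)
    (hΛ : 0 < Λ) (hexp : Real.exp (-Λ) ≤ 1 / 2) (J : Finset ι) (B : ι → Finset V) (c d : ι → ℝ)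
    (hc : ∀ p ∈ J, 0 ≤ c p) (hd : ∀ p ∈ J, 0 < d p)
    (htouch : ∀ p ∈ J, ∀ r, a ≤ r → ¬ Disjoint (B p) (W r) → B p ⊆ W (r + d p)) :
    ∃ r, a ≤ r ∧ r ≤ a + len ∧
      ∑ p ∈ J, (if Cut (B p) (W r) then c p / d p else 0) ≤
        ∑ p ∈ J, 2 * (Λ / len) * c p *
          ((if Disjoint (B p) (W r) then 0 else 1) + 2 * Real.exp (-Λ)) := by
  obtain ⟨d₀, hd₀, hd₀le⟩ : ∃ d₀ : ℝ, 0 < d₀ ∧ ∀ p ∈ J, d₀ ≤ d p := by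
    rcases J.eq_empty_or_nonempty with rfl | hJ
    · exact ⟨1, one_pos, by simp⟩
    · obtain ⟨p, hp, hmin⟩ := Finset.exists_min_image J d hJ
      exact ⟨d p, hd p hp, hmin⟩
  obtain ⟨m, hm⟩ := exists_nat_gt (max Λ (len / d₀))
  have hmΛ : Λ < m := lt_of_le_of_lt (le_max_left _ _) hm
  have hmd : len / d₀ < m := lt_of_le_of_lt (le_max_right _ _) hm
  have hm0 : (0 : ℝ) < m := hΛ.trans hmΛ
  set η : ℝ := len / m with hη
  have hη0 : 0 < η := by positivity
  have hηd : ∀ p ∈ J, η ≤ d p := fun p hp => by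
    refine le_trans ?_ (hd₀le p hp)
    rw [hη, div_le_iff₀ hm0]
    rw [div_lt_iff₀ hd₀] at hmd
    linarith
  set q : ℝ := 1 - Λ / m with hq
  have hΛm : Λ / m < 1 := by rw [div_lt_one hm0]; exact hmΛ
  have hΛm0 : 0 < Λ / m := by positivity
  have hq0 : 0 < q := by linarith
  have hq1 : q ≤ 1 := by linarith
  have hqm : q ^ m ≤ Real.exp (-Λ) := by
    calc q ^ m ≤ (Real.exp (-(Λ / m))) ^ m := by
          refine pow_le_pow_left₀ hq0.le ?_ m
          have := Real.add_one_le_exp (-(Λ / m))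
          linarith
      _ = Real.exp (-Λ) := by
          rw [← Real.exp_nat_mul]; congr 1; field_simp
  let r : ℕ → ℝ := fun i => a + i * η
  have hra : ∀ i, a ≤ r i := fun i => by simp only [r]; linarith [mul_nonneg i.cast_nonneg hη0.le]
  have hrm : ∀ i j, i ≤ j → r i ≤ r j := fun i j hij => by
    simp only [r]
    have : (i : ℝ) ≤ j := by exact_mod_cast hij
    gcongr
  -- the bound for a single demand, summed over the grid of radii
  have hone : ∀ p ∈ J, ∑ i ∈ Finset.range m, (if Cut (B p) (W (r i)) then q ^ i else 0) ≤
      (2 * d p / η) * ((1 - q) * ∑ i ∈ Finset.range m,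
        (if ¬ Disjoint (B p) (W (r i)) then q ^ i else 0) + q ^ m) := by
    intro p hp
    refine (geo_cut (fun i => ¬ Disjoint (B p) (W (r i))) (fun i => Cut (B p) (W (r i)))
      (fun i j hij h h' => h (h'.mono_right (hW (hrm i j hij)))) (fun i h => h.2)
      ⌈d p / η⌉₊ ?_ hq0.le hq1 m).trans ?_
    · intro i j hi hij hcut
      refine hcut.1 ((htouch p hp _ (hra i) hi).trans (hW ?_))
      have h1 := Nat.le_ceil (d p / η)
      have h2 : (i : ℝ) + ⌈d p / η⌉₊ ≤ j := by exact_mod_cast hij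
      rw [div_le_iff₀ hη0] at h1
      simp only [r]
      nlinarith
    · have h1 : 1 ≤ d p / η := by rw [one_le_div hη0]; exact hηd p hp
      have h2 := Nat.ceil_lt_add_one (a := d p / η) (by linarith)
      have h3 : (⌈d p / η⌉₊ : ℝ) ≤ 2 * d p / η := by
        rw [mul_div_assoc]; linarith
      have h4 : 0 ≤ ∑ i ∈ Finset.range m, (if ¬ Disjoint (B p) (W (r i)) then q ^ i else 0) :=
        Finset.sum_nonneg fun i _ => by split_ifs <;> positivity
      have h5 : 0 ≤ 1 - q := by linarith
      gcongr
  have hgeo : (1 - q) * ∑ i ∈ Finset.range m, q ^ i = 1 - q ^ m := by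
    rw [mul_comm]; exact geom_sum_mul_neg q m
  have hmne : (Finset.range m).Nonempty := by
    rw [Finset.nonempty_range_iff]; rintro rfl; simp at hm0
  obtain ⟨i, hi, hle⟩ := Finset.exists_le_of_sum_le (s := Finset.range m) hmne
    (f := fun i => q ^ i * ∑ p ∈ J, (if Cut (B p) (W (r i)) then c p / d p else 0))
    (g := fun i => q ^ i * ∑ p ∈ J, 2 * (Λ / len) * c p *
          ((if Disjoint (B p) (W (r i)) then 0 else 1) + 2 * Real.exp (-Λ))) (by
    simp only [Finset.mul_sum]
    rw [Finset.sum_comm, Finset.sum_comm (s := Finset.range m)]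
    refine Finset.sum_le_sum fun p hp => ?_
    have hcp := hc p hp
    have hdp := hd p hp
    have e1 : ∑ i ∈ Finset.range m, q ^ i * (if Cut (B p) (W (r i)) then c p / d p else 0) =
        (c p / d p) * ∑ i ∈ Finset.range m, (if Cut (B p) (W (r i)) then q ^ i else 0) := by
      rw [Finset.mul_sum]
      refine Finset.sum_congr rfl fun i _ => ?_
      split_ifs <;> ring
    have e2 : ∑ i ∈ Finset.range m, q ^ i * (2 * (Λ / len) * c p *
          ((if Disjoint (B p) (W (r i)) then 0 else 1) + 2 * Real.exp (-Λ))) =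
        2 * (Λ / len) * c p * (∑ i ∈ Finset.range m,
        (if ¬ Disjoint (B p) (W (r i)) then q ^ i else 0) +
          2 * Real.exp (-Λ) * ∑ i ∈ Finset.range m, q ^ i) := by
      rw [Finset.mul_sum, ← Finset.sum_add_distrib, Finset.mul_sum]
      refine Finset.sum_congr rfl fun i _ => ?_
      by_cases h : Disjoint (B p) (W (r i)) <;> simp [h] <;> ring
    rw [e1, e2]
    set T := ∑ i ∈ Finset.range m, (if ¬ Disjoint (B p) (W (r i)) then q ^ i else 0)
    set S := ∑ i ∈ Finset.range m, q ^ i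
    calc _ ≤ (c p / d p) * ((2 * d p / η) * ((1 - q) * T + q ^ m)) := by
          have := hone p hp
          gcongr
      _ ≤ (c p / d p) * ((2 * d p / η) * ((1 - q) * T +
            2 * Real.exp (-Λ) * ((1 - q) * S))) := by
          have h6 : q ^ m ≤ 2 * Real.exp (-Λ) * ((1 - q) * S) := by
            rw [hgeo]
            have := Real.exp_pos (-Λ)
            nlinarith
          gcongr
      _ = _ := by
          have : 1 - q = Λ / m := by rw [hq]; ring
          rw [this, hη]
          field_simp)
  refine ⟨r i, hra i, ?_, le_of_mul_le_mul_left hle (pow_pos hq0 i)⟩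
  have h1 : (i : ℝ) ≤ m := by exact_mod_cast (Finset.mem_range.1 hi).le
  have h2 : (m : ℝ) * η = len := by rw [hη]; field_simp
  simp only [r]
  nlinarith

/-- What the charge `(1 + log (|Y| / |B|))²` of a demand gains when the cluster `Y` is split into
`W` and `Y \ W`: a lower bound for the drop of the charge if `B` lies on one side, and the whole
charge if `B` is cut. -/
noncomputable def gain (Y B W : Finset V) : ℝ :=
  if B ⊆ W then 2 * lr Y W + lr Y W ^ 2
  else if Disjoint B W then 2 * lr Y (Y \ W) + lr Y (Y \ W) ^ 2
  else (1 + lr Y B) ^ 2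

lemma gain_nonneg {Y B W : Finset V} (hW : W ⊆ Y) : 0 ≤ gain Y B W := by
  have h1 := lr_nonneg hW
  have h2 := lr_nonneg (Finset.sdiff_subset (s := Y) (t := W))
  unfold gain
  split_ifs <;> positivity

end Window

section CutLemma

variable {V ι : Type} [DecidableEq V]

set_option maxHeartbeats 1000000 in
/-- Cutting lemma for a growing set that takes at most half of `Y`: within the window `[0, 1]` there
is a radius at which the cut demands are paid by the gain of all demands.

With `f r = log (|Y| / |W r|)`, the radius is chosen by `window_cut` in a window around
`2 ^ (-(k+1))`, where `k` is least with `f (2 ^ (-(k+1))) ≤ 2 ^ (k+1)`. There `f` is comparable to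
`2 ^ k`, hence the rate `4 ^ k` of the exponential radius is comparable to `f ^ 2`, the gain of the
demands swallowed by `W r`; a demand that is cut and short compared with the window has charge at
least `4 ^ k` because its set is too small to be reached earlier. -/
lemma unit_cut {Y : Finset V} {W : ℝ → Finset V} (hW : Monotone W) (hWY : ∀ r, W r ⊆ Y)
    (hne : (W 0).Nonempty) (hhalf : 2 * (W 1).card ≤ Y.card) (I : Finset ι) (B : ι → Finset V)
    (c d : ι → ℝ) (hc : ∀ p ∈ I, 0 ≤ c p) (hd : ∀ p ∈ I, 0 < d p) (hB : ∀ p ∈ I, (B p).Nonempty)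
    (hBY : ∀ p ∈ I, B p ⊆ Y)
    (htouch : ∀ p ∈ I, ∀ r, 0 ≤ r → ¬ Disjoint (B p) (W r) → B p ⊆ W (r + d p)) :
    ∃ r, 0 ≤ r ∧ r ≤ 1 ∧ ∑ p ∈ I, (if Cut (B p) (W r) then c p / d p else 0) ≤
      200 * ∑ p ∈ I, c p * gain Y (B p) (W r) := by
  classical
  have hneR : ∀ r, 0 ≤ r → (W r).Nonempty := fun r hr => hne.mono (hW hr)
  have hcardpos : ∀ r, 0 ≤ r → (0 : ℝ) < (W r).card := fun r hr => by
    exact_mod_cast (hneR r hr).card_pos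
  have hYpos : (0 : ℝ) < Y.card := by exact_mod_cast (hne.mono (hWY 0)).card_pos
  have hfanti : ∀ r r', 0 ≤ r → r ≤ r' → lr Y (W r') ≤ lr Y (W r) := fun r r' h0 h =>
    lr_anti (hW h) (hneR r h0) (hWY r')
  have hfhalf : ∀ r, 0 ≤ r → r ≤ 1 → Real.log 2 ≤ lr Y (W r) := by
    intro r h0 h1
    refine le_trans ?_ (hfanti r 1 h0 h1)
    unfold lr
    refine Real.log_le_log two_pos ?_
    rw [le_div_iff₀ (hcardpos 1 zero_le_one)]
    exact_mod_cast hhalf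
  -- the scale `2 ^ (-(k+1))` of the window: the first at which the taken proportion is large enough
  have hex : ∃ k : ℕ, lr Y (W ((1 / 2) ^ (k + 1))) ≤ 2 ^ (k + 1) := by
    obtain ⟨k, hk⟩ := pow_unbounded_of_one_lt (lr Y (W 0)) (one_lt_two)
    refine ⟨k, (hfanti 0 _ le_rfl (by positivity)).trans (hk.le.trans ?_)⟩
    exact pow_le_pow_right₀ one_le_two (by omega)
  obtain ⟨k, hk, hkmin⟩ : ∃ k : ℕ, lr Y (W ((1 / 2) ^ (k + 1))) ≤ 2 ^ (k + 1) ∧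
      ∀ i < k, (2 : ℝ) ^ (i + 1) < lr Y (W ((1 / 2) ^ (i + 1))) :=
    ⟨Nat.find hex, Nat.find_spec hex, fun i hi => not_le.1 (Nat.find_min hex hi)⟩
  set a : ℝ := (1 / 2) ^ (k + 1) with ha
  have ha0 : 0 < a := by positivity
  have ha1 : a ≤ 1 / 2 := by
    rw [ha, pow_succ]
    have : ((1 : ℝ) / 2) ^ k ≤ 1 := pow_le_one₀ (by norm_num) (by norm_num)
    linarith
  have hka : (2 : ℝ) ^ (k + 1) * a = 1 := by
    rw [ha, ← mul_pow]; norm_num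
  set x : ℝ := 2 ^ k with hx
  have hx1 : 1 ≤ x := one_le_pow₀ one_le_two
  have hxs : (2 : ℝ) ^ (k + 1) = 2 * x := by rw [pow_succ]; ring
  rw [hxs] at hk hka
  have hflow : ∀ r, a ≤ r → r ≤ a + a / 2 → x * Real.log 2 ≤ lr Y (W r) := by
    intro r h1 h2
    rcases Nat.eq_zero_or_pos k with h0 | h0
    · have : x = 1 := by rw [hx, h0]; simp
      rw [this, one_mul]
      exact hfhalf r (by linarith) (by linarith)
    · obtain ⟨i, rfl⟩ := Nat.exists_eq_add_of_lt h0
      have := hkmin i (by omega)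
      have h3 : a + a / 2 ≤ (1 / 2) ^ (i + 1) := by
        rw [ha, zero_add, pow_succ _ (i + 1)]
        have : (0 : ℝ) ≤ (1 / 2) ^ (i + 1) := by positivity
        linarith
      have h4 := hfanti r _ (by linarith) (h2.trans h3)
      have h5 : x = 2 ^ (i + 1) := by rw [hx, zero_add]
      have := Real.log_two_lt_d9
      nlinarith
  -- demands whose radius is not small compared with the window pay for themselves
  set J := I.filter fun p => ¬ (1 / d p ≤ 8 * (1 + lr Y (B p))) with hJ
  have hexp4 : Real.exp (-(4 * x)) ≤ 1 / 2 := by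
    have h1 := Real.add_one_le_exp (4 * x)
    rw [Real.exp_neg, inv_le_comm₀ (Real.exp_pos _) (by norm_num)]
    linarith
  obtain ⟨r, hr1, hr2, hsum⟩ := window_cut hW (a := a) (len := a / 2) (Λ := 4 * x) (by linarith)
    (by linarith) hexp4 J B c d (fun p hp => hc p (Finset.mem_filter.1 hp).1)
    (fun p hp => hd p (Finset.mem_filter.1 hp).1)
    (fun p hp r hr => htouch p (Finset.mem_filter.1 hp).1 r (by linarith))
  have hr0 : 0 ≤ r := by linarith
  refine ⟨r, hr0, by linarith, ?_⟩
  have hlam : 4 * x / (a / 2) = 16 * x ^ 2 := by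
    rw [div_eq_iff (by positivity)]
    nlinarith
  rw [hlam] at hsum
  have hfr := hflow r hr1 hr2
  have hfr' : lr Y (W r) ≤ 2 * x := (hfanti a r ha0.le hr1).trans hk
  have hlog2 := Real.log_two_gt_d9
  have hbig : ∀ p ∈ I, 1 / d p ≤ 8 * (1 + lr Y (B p)) →
      (if Cut (B p) (W r) then c p / d p else 0) ≤ 200 * (c p * gain Y (B p) (W r)) := by
    intro p hp hbp
    have hcp := hc p hp
    have hL := lr_nonneg (hBY p hp)
    split_ifs with hcut
    · have hg : gain Y (B p) (W r) = (1 + lr Y (B p)) ^ 2 := by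
        unfold gain; rw [if_neg hcut.1, if_neg hcut.2]
      rw [hg, div_eq_mul_one_div]
      have : 1 / d p ≤ 200 * (1 + lr Y (B p)) ^ 2 := by nlinarith
      nlinarith
    · have := gain_nonneg (B := B p) (hWY r)
      positivity
  have hsmall : ∀ p ∈ J, 2 * (16 * x ^ 2) * c p *
      ((if Disjoint (B p) (W r) then 0 else 1) + 2 * Real.exp (-(4 * x))) ≤
      200 * (c p * gain Y (B p) (W r)) := by
    intro p hp
    obtain ⟨hpI, hsm⟩ := Finset.mem_filter.1 hp
    have hcp := hc p hpI
    suffices h : 2 * (16 * x ^ 2) *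
        ((if Disjoint (B p) (W r) then 0 else 1) + 2 * Real.exp (-(4 * x))) ≤
        200 * gain Y (B p) (W r) by nlinarith
    unfold gain
    by_cases hin : B p ⊆ W r
    · have hnd : ¬ Disjoint (B p) (W r) := fun h =>
        (hB p hpI).ne_empty (by simpa using h.eq_bot_of_le hin)
      rw [if_pos hin, if_neg hnd]
      have h1 : (x * 0.69) ^ 2 ≤ lr Y (W r) ^ 2 := by
        refine pow_le_pow_left₀ (by positivity) (le_trans ?_ hfr) 2
        gcongr; linarith
      have h2 : 0 ≤ lr Y (W r) := lr_nonneg (hWY r)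
      nlinarith
    rw [if_neg hin]
    by_cases hdis : Disjoint (B p) (W r)
    · rw [if_pos hdis, if_pos hdis]
      have hwr := hcardpos r hr0
      have hwcard : (2 : ℝ) * (W r).card ≤ Y.card := by
        have := Finset.card_le_card (hW (show r ≤ 1 by linarith))
        exact_mod_cast (by omega : 2 * (W r).card ≤ Y.card)
      have hz : ((Y \ W r).card : ℝ) = Y.card - (W r).card := by
        rw [Finset.card_sdiff_of_subset (hWY r), Nat.cast_sub (Finset.card_le_card (hWY r))]
      -- a set of proportion `s` leaves a complement of logarithmic ratio at least `s`
      have h1 : ((W r).card : ℝ) / Y.card ≤ lr Y (Y \ W r) := by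
        have h2 := Real.one_sub_inv_le_log_of_pos
          (show (0 : ℝ) < Y.card / (Y \ W r).card by rw [hz]; exact div_pos hYpos (by linarith))
        unfold lr
        refine le_trans (le_of_eq ?_) h2
        rw [inv_div, hz]; field_simp; ring
      have h2 : Real.exp (-(2 * x)) ≤ ((W r).card : ℝ) / Y.card := by
        rw [Real.exp_neg, inv_le_comm₀ (Real.exp_pos _) (by positivity), inv_div,
          ← Real.log_le_iff_le_exp (by positivity)]
        exact hfr'
      have h3 : x ^ 2 * Real.exp (-(4 * x)) ≤ Real.exp (-(2 * x)) := by
        have h4 : Real.exp (-(4 * x)) = Real.exp (-(2 * x)) * (Real.exp (-x)) ^ 2 := by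
          rw [← Real.exp_nat_mul, ← Real.exp_add]; congr 1; push_cast; ring
        have h5 : x * Real.exp (-x) ≤ 1 := by
          have := Real.add_one_le_exp x
          rw [Real.exp_neg, ← div_eq_mul_inv, div_le_one (Real.exp_pos _)]
          linarith
        have h6 : 0 ≤ x * Real.exp (-x) := by positivity
        have h7 : (x * Real.exp (-x)) ^ 2 ≤ 1 := by nlinarith
        rw [h4]
        have := Real.exp_pos (-(2 * x))
        nlinarith
      nlinarith [sq_nonneg (lr Y (Y \ W r)), Real.exp_pos (-(2 * x))]
    · rw [if_neg hdis, if_neg hdis]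
      have hL := lr_nonneg (hBY p hpI)
      -- a touched small demand has small relative size, as otherwise it would not fit into the
      -- sets of radius much larger than the window
      have hkey : x ≤ 1 + lr Y (B p) := by
        by_contra! hcon
        have hk0 : k ≠ 0 := by
          intro h0
          have : x = 1 := by rw [hx, h0]; simp
          linarith
        have hex2 : ∃ i : ℕ, lr Y (B p) ≤ 2 ^ (i + 1) := by
          refine ⟨k, ?_⟩
          rw [hxs]; linarith
        have hi := Nat.find_spec hex2
        have himin : ∀ j < Nat.find hex2, ¬ lr Y (B p) ≤ 2 ^ (j + 1) :=
          fun j hj => Nat.find_min hex2 hj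
        set i := Nat.find hex2
        have hik : i < k := by
          by_contra! hki
          refine himin (k - 1) (by omega) ?_
          rw [show k - 1 + 1 = k by omega]
          linarith
        have hnot : ¬ B p ⊆ W ((1 / 2) ^ (i + 1)) := fun hsub => by
          have h1 := lr_anti hsub (hB p hpI) (hWY _)
          linarith [hkmin i hik]
        have hrd : (1 / 2 : ℝ) ^ (i + 1) < r + d p := by
          by_contra! h
          exact hnot ((htouch p hpI r hr0 hdis).trans (hW h))
        have hai : a ≤ (1 / 2) ^ (i + 1) / 2 := by
          rw [ha, show ((1 : ℝ) / 2) ^ (i + 1) / 2 = (1 / 2) ^ (i + 1 + 1) by rw [pow_succ _ (i + 1)]; ring]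
          exact pow_le_pow_of_le_one (by norm_num) (by norm_num) (by omega)
        have hdlow : (1 / 2 : ℝ) ^ (i + 1) / 4 ≤ d p := by linarith
        refine hsm ?_
        have h2i : (2 : ℝ) ^ i ≤ 1 + lr Y (B p) := by
          rcases Nat.eq_zero_or_pos i with h0 | h0
          · rw [h0, pow_zero]; linarith
          · have := himin (i - 1) (by omega)
            rw [show i - 1 + 1 = i by omega] at this
            linarith
        have hpp : (1 / 2 : ℝ) ^ (i + 1) * 2 ^ i = 1 / 2 := by
          rw [pow_succ, mul_right_comm, ← mul_pow]; norm_num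
        have hdp := hd p hpI
        rw [div_le_iff₀ hdp]
        have : (1 / 2 : ℝ) ^ (i + 1) / 4 * 2 ^ i ≤ d p * (1 + lr Y (B p)) :=
          mul_le_mul hdlow h2i (by positivity) hdp.le
        nlinarith
      nlinarith
  have hsplit : ∀ F : ι → ℝ, ∑ p ∈ I, F p = ∑ p ∈ J, F p +
      ∑ p ∈ I.filter (fun p => 1 / d p ≤ 8 * (1 + lr Y (B p))), F p := fun F => by
    rw [hJ, add_comm, Finset.sum_filter_add_sum_filter_not]
  rw [Finset.mul_sum, hsplit, hsplit (fun p => 200 * (c p * gain Y (B p) (W r)))]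
  refine add_le_add (hsum.trans (Finset.sum_le_sum hsmall)) (Finset.sum_le_sum fun p hp => ?_)
  exact hbig p (Finset.mem_filter.1 hp).1 (Finset.mem_filter.1 hp).2

/-- Cutting lemma on the window `[0, h]`; whichever of `W (h / 2)` and its complement is the
smaller one is grown from the corresponding end of the window. -/
lemma general_cut {Y : Finset V} {W : ℝ → Finset V} (hW : Monotone W) (hWY : ∀ r, W r ⊆ Y)
    {h : ℝ} (hh : 0 < h) (hne : (W 0).Nonempty) (hne' : (Y \ W h).Nonempty) (I : Finset ι)
    (B : ι → Finset V) (c d : ι → ℝ) (hc : ∀ p ∈ I, 0 ≤ c p) (hd : ∀ p ∈ I, 0 < d p)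
    (hB : ∀ p ∈ I, (B p).Nonempty) (hBY : ∀ p ∈ I, B p ⊆ Y)
    (htouch : ∀ p ∈ I, ∀ r, ¬ Disjoint (B p) (W r) → B p ⊆ W (r + d p)) :
    ∃ r, 0 ≤ r ∧ r ≤ h ∧ h * ∑ p ∈ I, (if Cut (B p) (W r) then c p / d p else 0) ≤
      400 * ∑ p ∈ I, c p * gain Y (B p) (W r) := by
  have hh2 : 0 < h / 2 := by linarith
  by_cases hcase : 2 * (W (h / 2)).card ≤ Y.card
  · obtain ⟨r, h0, h1, hr⟩ := unit_cut (Y := Y) (W := fun r => W (r * (h / 2)))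
      (fun r r' hrr => hW (by gcongr)) (fun r => hWY _) (by simpa using hne)
      (by simpa using hcase) I B c (fun p => d p / (h / 2)) hc
      (fun p hp => div_pos (hd p hp) hh2) hB hBY
      (fun p hp r _ hdis => by
        have := htouch p hp _ hdis
        rwa [show (r + d p / (h / 2)) * (h / 2) = r * (h / 2) + d p by field_simp])
    refine ⟨r * (h / 2), by positivity, by nlinarith, ?_⟩
    have e : ∑ p ∈ I, (if Cut (B p) (W (r * (h / 2))) then c p / (d p / (h / 2)) else 0) =
        (h / 2) * ∑ p ∈ I, (if Cut (B p) (W (r * (h / 2))) then c p / d p else 0) := by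
      rw [Finset.mul_sum]
      refine Finset.sum_congr rfl fun p hp => ?_
      have := hd p hp
      split_ifs
      · field_simp
      · simp
    rw [e] at hr
    linarith
  · have hsub : ∀ r r', r ≤ r' → Y \ W r' ⊆ Y \ W r := fun r r' hrr =>
      Finset.sdiff_subset_sdiff subset_rfl (hW hrr)
    obtain ⟨r, h0, h1, hr⟩ := unit_cut (Y := Y) (W := fun r => Y \ W (h - r * (h / 2)))
      (fun r r' hrr => hsub _ _ (by gcongr)) (fun r => Finset.sdiff_subset) (by simpa using hne')
      (by
        rw [one_mul, show h - h / 2 = h / 2 by ring, Finset.card_sdiff_of_subset (hWY _)]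
        omega) I B c (fun p => d p / (h / 2)) hc
      (fun p hp => div_pos (hd p hp) hh2) hB hBY
      (fun p hp r _ hdis => by
        rw [show h - (r + d p / (h / 2)) * (h / 2) = h - r * (h / 2) - d p by field_simp; ring]
        -- the touching condition for `W` reads backwards for the complements
        refine Finset.subset_sdiff.2 ⟨hBY p hp, ?_⟩
        by_contra hcon
        have h2 := htouch p hp _ hcon
        rw [sub_add_cancel] at h2
        exact hdis (Finset.disjoint_sdiff.mono_left h2))
    refine ⟨h - r * (h / 2), by nlinarith, by nlinarith, ?_⟩
    set R := h - r * (h / 2)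
    have hd1 : ∀ p ∈ I, (B p ⊆ Y \ W R ↔ Disjoint (B p) (W R)) := fun p hp => by
      rw [Finset.subset_sdiff]; exact and_iff_right (hBY p hp)
    have hd2 : ∀ p ∈ I, (Disjoint (B p) (Y \ W R) ↔ B p ⊆ W R) := fun p hp => by
      rw [Finset.disjoint_left]
      constructor
      · intro hdj z hz
        by_contra hzW
        exact hdj hz (Finset.mem_sdiff.2 ⟨hBY p hp hz, hzW⟩)
      · intro hs z hz hz'
        exact (Finset.mem_sdiff.1 hz').2 (hs hz)
    have hcut : ∀ p ∈ I, (Cut (B p) (Y \ W R) ↔ Cut (B p) (W R)) := fun p hp => by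
      unfold Cut; rw [hd1 p hp, hd2 p hp, and_comm]
    have hgain : ∀ p ∈ I, gain Y (B p) (Y \ W R) = gain Y (B p) (W R) := fun p hp => by
      unfold gain
      rw [sdiff_sdiff_right_self, Finset.inf_eq_inter, Finset.inter_eq_right.2 (hWY R)]
      simp only [hd1 p hp, hd2 p hp]
      split_ifs with h1 h2 <;> try rfl
      exact absurd (h1.eq_bot_of_le h2) (hB p hp).ne_empty
    have e : ∑ p ∈ I, (if Cut (B p) (Y \ W R) then c p / (d p / (h / 2)) else 0) =
        (h / 2) * ∑ p ∈ I, (if Cut (B p) (W R) then c p / d p else 0) := by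
      rw [Finset.mul_sum]
      refine Finset.sum_congr rfl fun p hp => ?_
      have := hd p hp
      simp only [hcut p hp]
      split_ifs
      · field_simp
      · simp
    have e' : ∑ p ∈ I, c p * gain Y (B p) (Y \ W R) = ∑ p ∈ I, c p * gain Y (B p) (W R) :=
      Finset.sum_congr rfl fun p hp => by rw [hgain p hp]
    rw [e, e'] at hr
    linarith

end CutLemma

/-! ### The hierarchical petal decomposition -/

/-- A family of weighted demands: the pair `(u p, v p)` lies in the set `B p`, any two points of
which are joined inside `B p` by a walk of length at most `2 * d p`; the number `a p` is the weight
of the demand in the objective. -/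
structure Demands {V : Type} (G : SimpleGraph V) (ω : V → V → ℝ) (ι : Type) where
  B : ι → Finset V
  u : ι → V
  v : ι → V
  d : ι → ℝ
  a : ι → ℝ
  hu : ∀ p, u p ∈ B p
  hv : ∀ p, v p ∈ B p
  hne : ∀ p, u p ≠ v p
  hd : ∀ p, 0 < d p
  ha : ∀ p, 0 ≤ a p
  conn : ∀ p, ∀ z ∈ B p, ∀ z' ∈ B p, ∃ s ≤ 2 * d p, Rch G ω (B p) z z' s

/-- `Good D Y x₀ δ Q I`: the cluster `Y` has a spanning tree, of weight `ω`, in which distances to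
the root `x₀` exceed `δ` by a factor at most `4`, and at most `2` on the spine `Q`, and which routes
the demands in `I` at a total cost bounded by their charges. The tree is encoded as a graph `T` with
few edges that connects `Y`. -/
def Good {V ι : Type} {G : SimpleGraph V} {ω : V → V → ℝ} (D : Demands G ω ι) (Y : Finset V)
    (x₀ : V) (δ : V → ℝ) (Q : Finset V) (I : Finset ι) : Prop :=
  ∃ T ≤ G, T.edgeSet.ncard + 1 ≤ Y.card ∧
    (∀ z ∈ Y, ∃ s ≤ 4 * δ z, Rch T ω Y x₀ z s) ∧
    (∀ q ∈ Q, ∃ s ≤ 2 * δ q, Rch T ω Y x₀ q s) ∧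
    ∃ cost : ι → ℝ, (∀ p ∈ I, ∃ s ≤ cost p, Rch T ω Y (D.u p) (D.v p) s) ∧
      ∑ p ∈ I, D.a p * cost p ≤ 102400 * ∑ p ∈ I, D.a p * D.d p * (1 + lr Y (D.B p)) ^ 2

section Main

variable {V ι : Type} {G : SimpleGraph V} {ω : V → V → ℝ} (D : Demands G ω ι)

lemma lr_add {Y S B : Finset V} (hB : B.Nonempty) (hBS : B ⊆ S) (hSY : S ⊆ Y) :
    lr Y B = lr Y S + lr S B := by
  have h1 : (0 : ℝ) < B.card := by exact_mod_cast hB.card_pos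
  have h2 : (0 : ℝ) < S.card := by exact_mod_cast (hB.mono hBS).card_pos
  have h3 : (0 : ℝ) < Y.card := by exact_mod_cast ((hB.mono hBS).mono hSY).card_pos
  unfold lr
  rw [Real.log_div h3.ne' h1.ne', Real.log_div h3.ne' h2.ne', Real.log_div h2.ne' h1.ne']
  ring

/-- Passing to a part `S` of the cluster lowers the charge by at least the gain. -/
lemma charge_drop {Y S B : Finset V} (hB : B.Nonempty) (hBS : B ⊆ S) (hSY : S ⊆ Y) :
    (2 * lr Y S + lr Y S ^ 2) + (1 + lr S B) ^ 2 ≤ (1 + lr Y B) ^ 2 := by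
  rw [lr_add hB hBS hSY]
  have h1 := lr_nonneg hSY
  have h2 := lr_nonneg hBS
  nlinarith [mul_nonneg h1 h2]

variable [DecidableEq V]

/-- There is a petal radius at which the cut demands can afford a cost of `8 * Δ`. The factor
`102400 = 32 * 8 * 400` collects `8 * Δ = 32 * (Δ / 4)`, the speed of petals against walks of length
`2 * d p`, and the constant of `general_cut`. -/
lemma exists_radius {w : V → V → ℝ} {Y P : Finset V} {x₀ t : V} {δ : V → ℝ} {I : Finset ι} {Δ : ℝ}
    (hc : Core G w Y x₀ δ) (hwω : ∀ u v, G.Adj u v → w u v ≤ ω u v)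
    (hP : Spine G w δ x₀ t P) (hPY : P ⊆ Y) (hΔ : 0 < Δ) (ht : Δ / 2 ≤ δ t)
    (hI : ∀ p ∈ I, D.B p ⊆ Y) :
    ∃ r, 0 ≤ r ∧ r ≤ Δ / 4 ∧
      8 * Δ * ∑ p ∈ I, (if Cut (D.B p) (petal G w Y δ P t r) then D.a p else 0) ≤
      102400 * ∑ p ∈ I, D.a p * D.d p * gain Y (D.B p) (petal G w Y δ P t r) := by
  obtain ⟨r, h0, h1, hr⟩ := general_cut (Y := Y) (W := petal G w Y δ P t)
    (fun r r' h => petal_mono h) petal_subset (h := Δ / 4) (by linarith)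
    ⟨t, spine_mem_petal hPY hP.top (by linarith)⟩ ⟨x₀, (core_sdiff hc (by linarith)).mem⟩
    I D.B (fun p => 8 * (D.a p * D.d p)) (fun p => 8 * D.d p)
    (fun p _ => by have := D.ha p; have := D.hd p; positivity)
    (fun p _ => by have := D.hd p; positivity) (fun p _ => ⟨_, D.hu p⟩) hI
    (fun p hp r hdis => by
      obtain ⟨z, hz, hzW⟩ := Finset.not_disjoint_iff.1 hdis
      intro z' hz'
      obtain ⟨s, hs, hR⟩ := D.conn p z hz z' hz'
      exact petal_mono (by linarith)
        (petal_rch hwω hc (by exact_mod_cast hI p hp) hzW hR))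
  refine ⟨r, h0, h1, ?_⟩
  have e1 : ∀ p, 8 * (D.a p * D.d p) / (8 * D.d p) = D.a p := fun p => by
    have := D.hd p; field_simp
  have e2 : ∑ p ∈ I, 8 * (D.a p * D.d p) * gain Y (D.B p) (petal G w Y δ P t r) =
      8 * ∑ p ∈ I, D.a p * D.d p * gain Y (D.B p) (petal G w Y δ P t r) := by
    rw [Finset.mul_sum]
    exact Finset.sum_congr rfl fun p _ => by ring
  simp only [e1] at hr
  rw [e2] at hr
  linarith

variable [Fintype V]

/-- Spanning trees of a petal `W` and of the rest of the cluster are joined by one edge. -/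
lemma Good.combine {D : Demands G ω ι} (hω : ∀ u v, ω u v = ω v u) {Y W Q QW QZ : Finset V}
    {x₀ x y : V} {δ δ' : V → ℝ} {I : Finset ι} {σ Δ : ℝ} (hWY : W ⊆ Y) (hx : x ∈ W)
    (hyx : G.Adj y x)
    (hGW : Good D W x δ' QW (I.filter fun p => D.B p ⊆ W))
    (hGZ : Good D (Y \ W) x₀ δ QZ (I.filter fun p => ¬ D.B p ⊆ W ∧ Disjoint (D.B p) W))
    (hσ : (y ∈ QZ ∧ σ = 2 * δ y) ∨ (y ∈ Y \ W ∧ σ = 4 * δ y))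
    (hdist : ∀ z ∈ W, σ + ω y x + 4 * δ' z ≤ 4 * δ z)
    (hQ : ∀ q ∈ Q, q ∈ QZ ∨ (q ∈ QW ∧ σ + ω y x + 2 * δ' q ≤ 2 * δ q))
    (hΔ : ∀ z ∈ Y, δ z ≤ Δ) (hI : ∀ p ∈ I, D.B p ⊆ Y)
    (hcut : 8 * Δ * ∑ p ∈ I, (if Cut (D.B p) W then D.a p else 0) ≤
      102400 * ∑ p ∈ I, D.a p * D.d p * gain Y (D.B p) W) :
    Good D Y x₀ δ Q I := by
  obtain ⟨T₁, hT₁, hc₁, hr₁, hq₁, cost₁, hk₁, hs₁⟩ := hGW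
  obtain ⟨T₂, hT₂, hc₂, hr₂, hq₂, cost₂, hk₂, hs₂⟩ := hGZ
  set T : SimpleGraph V := T₁ ⊔ T₂ ⊔ SimpleGraph.edge y x with hT
  have hZY : Y \ W ⊆ Y := Finset.sdiff_subset
  have up₁ : ∀ {a b s}, Rch T₁ ω W a b s → Rch T ω Y a b s := fun h =>
    h.mono (fun u v h => Or.inl (Or.inl h)) (by exact_mod_cast hWY)
  have up₂ : ∀ {a b s}, Rch T₂ ω (Y \ W : Finset V) a b s → Rch T ω Y a b s := fun h =>
    h.mono (fun u v h => Or.inl (Or.inr h)) (by exact_mod_cast hZY)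
  obtain ⟨sy, hsy, hRy⟩ : ∃ s ≤ σ, Rch T ω Y x₀ y s := by
    rcases hσ with ⟨h, rfl⟩ | ⟨h, rfl⟩
    · obtain ⟨s, h1, h2⟩ := hq₂ y h
      exact ⟨s, h1, up₂ h2⟩
    · obtain ⟨s, h1, h2⟩ := hr₂ y h
      exact ⟨s, h1, up₂ h2⟩
  have hadj : T.Adj y x := by
    refine Or.inr ?_
    rw [SimpleGraph.edge_adj]
    exact ⟨Or.inl ⟨rfl, rfl⟩, hyx.ne⟩
  have hRx : Rch T ω Y x₀ x (sy + ω y x) := hRy.step hadj (hWY hx)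
  have hreach : ∀ z ∈ Y, ∃ s ≤ 4 * δ z, Rch T ω Y x₀ z s := by
    intro z hz
    by_cases hzW : z ∈ W
    · obtain ⟨s, h1, h2⟩ := hr₁ z hzW
      exact ⟨_, by linarith [hdist z hzW], hRx.trans (up₁ h2)⟩
    · obtain ⟨s, h1, h2⟩ := hr₂ z (Finset.mem_sdiff.2 ⟨hz, hzW⟩)
      exact ⟨s, h1, up₂ h2⟩
  refine ⟨T, ?_, ?_, hreach, ?_, fun p => if D.B p ⊆ W then cost₁ p else
    if Disjoint (D.B p) W then cost₂ p else 8 * Δ, ?_, ?_⟩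
  · refine sup_le (sup_le hT₁ hT₂) ?_
    rw [SimpleGraph.edge_le_iff]
    exact Or.inr hyx
  · have h1 : T.edgeSet ⊆ T₁.edgeSet ∪ T₂.edgeSet ∪ {s(y, x)} := by
      rw [hT, SimpleGraph.edgeSet_sup, SimpleGraph.edgeSet_sup]
      exact Set.union_subset_union_right _ (by
        rw [SimpleGraph.edgeSet_edge_of_ne hyx.ne])
    have h2 := Set.ncard_le_ncard h1 (Set.toFinite _)
    have h3 := Set.ncard_union_le (T₁.edgeSet ∪ T₂.edgeSet) {s(y, x)}
    have h4 := Set.ncard_union_le T₁.edgeSet T₂.edgeSet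
    rw [Set.ncard_singleton] at h3
    have h5 : (Y \ W).card + W.card = Y.card := Finset.card_sdiff_add_card_eq_card hWY
    omega
  · intro q hq
    rcases hQ q hq with h | ⟨h, hle⟩
    · obtain ⟨s, h1, h2⟩ := hq₂ q h
      exact ⟨s, h1, up₂ h2⟩
    · obtain ⟨s, h1, h2⟩ := hq₁ q h
      exact ⟨_, by linarith, hRx.trans (up₁ h2)⟩
  · intro p hp
    by_cases h1 : D.B p ⊆ W
    · obtain ⟨s, hs, hR⟩ := hk₁ p (Finset.mem_filter.2 ⟨hp, h1⟩)
      simp only [h1, if_true]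
      exact ⟨s, hs, up₁ hR⟩
    by_cases h2 : Disjoint (D.B p) W
    · obtain ⟨s, hs, hR⟩ := hk₂ p (Finset.mem_filter.2 ⟨hp, h1, h2⟩)
      simp only [h1, h2, if_true, if_false]
      exact ⟨s, hs, up₂ hR⟩
    · simp only [h1, h2, if_false]
      have hu := hI p hp (D.hu p)
      have hv := hI p hp (D.hv p)
      obtain ⟨s, hs, hR⟩ := hreach _ hu
      obtain ⟨s', hs', hR'⟩ := hreach _ hv
      exact ⟨_, by linarith [hΔ _ hu, hΔ _ hv], (hR.symm hω).trans hR'⟩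
  · have e : ∑ p ∈ I, D.a p * (if D.B p ⊆ W then cost₁ p else
        if Disjoint (D.B p) W then cost₂ p else 8 * Δ) =
        (∑ p ∈ I.filter (fun p => D.B p ⊆ W), D.a p * cost₁ p +
          ∑ p ∈ I.filter (fun p => ¬ D.B p ⊆ W ∧ Disjoint (D.B p) W), D.a p * cost₂ p) +
          8 * Δ * ∑ p ∈ I, (if Cut (D.B p) W then D.a p else 0) := by
      rw [Finset.sum_filter, Finset.sum_filter, Finset.mul_sum, ← Finset.sum_add_distrib,
        ← Finset.sum_add_distrib]
      refine Finset.sum_congr rfl fun p _ => ?_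
      unfold Cut
      by_cases h1 : D.B p ⊆ W <;> by_cases h2 : Disjoint (D.B p) W <;> simp [h1, h2]
      ring
    rw [e]
    refine (add_le_add (add_le_add hs₁ hs₂) hcut).trans ?_
    rw [← mul_add, ← mul_add]
    refine mul_le_mul_of_nonneg_left ?_ (by norm_num)
    rw [Finset.sum_filter, Finset.sum_filter, ← Finset.sum_add_distrib, ← Finset.sum_add_distrib]
    refine Finset.sum_le_sum fun p hp => ?_
    have had : 0 ≤ D.a p * D.d p := mul_nonneg (D.ha p) (D.hd p).le
    have hBne : (D.B p).Nonempty := ⟨_, D.hu p⟩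
    unfold gain
    by_cases h1 : D.B p ⊆ W
    · simp only [h1, if_true, not_true, false_and, if_false]
      have := charge_drop hBne h1 hWY
      nlinarith
    by_cases h2 : Disjoint (D.B p) W
    · simp only [h1, h2, if_true, if_false, not_false_iff, and_self]
      have := charge_drop hBne (Finset.subset_sdiff.2 ⟨hI p hp, h2⟩) hZY
      nlinarith
    · simp only [h1, h2, if_false, and_false]
      linarith

/-- The recursive petal decomposition. The weights `w` of the cluster are the original weights `ω`,
except that edges inside the spine `Q` may have been halved. A petal is removed around the end of
the spine if that end is at more than half the radius `Δ` of the cluster, and around a farthest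
vertex otherwise; in the second case the edges of the new spine are halved inside the petal, which
makes the radius of the petal small enough for the stretch to the root not to accumulate over the
levels of the recursion. -/
theorem exists_good (hωs : ∀ u v, ω u v = ω v u) (n : ℕ) :
    ∀ (Y : Finset V) (w : V → V → ℝ) (x₀ t : V) (δ : V → ℝ) (Q : Finset V) (I : Finset ι),
      Y.card ≤ n → Core G w Y x₀ δ → Spine G w δ x₀ t Q → Q ⊆ Y →
      (∀ u v, G.Adj u v → w u v ≤ ω u v) →
      (∀ u ∈ Y, ∀ v ∈ Y, G.Adj u v → ω u v ≤ 2 * w u v) →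
      (∀ u ∈ Y, ∀ v ∈ Y, w u v = ω u v ∨ (u ∈ Q ∧ v ∈ Q)) → (∀ p ∈ I, D.B p ⊆ Y) →
      Good D Y x₀ δ Q I := by
  induction n with
  | zero =>
    intro Y w x₀ t δ Q I hn hc
    have := Finset.card_pos.2 ⟨x₀, hc.mem⟩
    omega
  | succ n ih =>
    intro Y w x₀ t₀ δ Q I hn hc hQ hQY hwω hω2 hwQ hI
    obtain ⟨t₁, ht₁, hmax⟩ := Finset.exists_max_image Y δ ⟨x₀, hc.mem⟩
    set Δ := δ t₁ with hΔdef
    by_cases hone : t₁ = x₀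
    · -- all distances vanish, so the cluster is a single vertex
      have hY : ∀ z ∈ Y, z = x₀ := by
        intro z hz
        by_contra hne
        have h1 := hc.pos_of_ne z hz hne
        have h2 := hmax z hz
        rw [hΔdef, hone, hc.zero] at h2
        linarith
      have hI0 : I = ∅ := Finset.eq_empty_of_forall_notMem fun p hp => D.hne p <| by
        rw [hY _ (hI p hp (D.hu p)), hY _ (hI p hp (D.hv p))]
      have hcard := Finset.card_pos.2 ⟨x₀, hc.mem⟩
      refine ⟨⊥, bot_le, by simpa using hcard, ?_, ?_, fun _ => 0, ?_, ?_⟩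
      · intro z hz
        rw [hY z hz, hc.zero]
        exact ⟨0, by simp, .refl hc.mem⟩
      · intro z hz
        rw [hY z (hQY hz), hc.zero]
        exact ⟨0, by simp, .refl hc.mem⟩
      · simp [hI0]
      · simp [hI0]
    have hΔ : 0 < Δ := hc.pos_of_ne t₁ ht₁ hone
    by_cases hspec : Δ / 2 ≤ δ t₀
    · -- the petal is taken around the end of the spine
      obtain ⟨r, hr0, hr1, hcut⟩ := exists_radius D hc hwω hQ hQY hΔ hspec hI
      obtain ⟨x, y, hxQ, hxW, hyQ, hyW, hadj, hxy, hylow, hpred, hxle, hxlt, δ', hc', hQ', heq,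
        hδ'⟩ := petal_cluster hc hQ hQY (r := r) (c := 1) hr0 (by linarith) one_pos le_rfl
      set W := petal G w Y δ Q t₀ r with hW
      have hWY : W ⊆ Y := petal_subset r
      have hsc : scaleOn Q 1 w = w := by
        funext u v; simp [scaleOn]
      rw [hsc] at hc' hQ'
      have hcardW := Finset.card_pos.2 ⟨x, hxW⟩
      have hcardZ : 0 < (Y \ W).card := Finset.card_pos.2 ⟨y, Finset.mem_sdiff.2 ⟨hQY hyQ, hyW⟩⟩
      have hcards := Finset.card_sdiff_add_card_eq_card hWY
      have hω : ω y x ≤ 2 * (δ x - δ y) := by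
        have := hω2 y (hQY hyQ) x (hQY hxQ) hadj
        linarith
      have hxr : r ≤ δ x := by
        have := petal_low hc hxW
        linarith
      refine Good.combine (QW := Q ∩ W) (QZ := Q \ W) (σ := 2 * δ y) (δ' := δ') (x := x) (y := y)
        hωs hWY hxW hadj ?_ ?_ (Or.inl ⟨Finset.mem_sdiff.2 ⟨hyQ, hyW⟩, rfl⟩) ?_ ?_ hmax hI hcut
      · refine ih W w x t₀ δ' (Q ∩ W) _ (by omega) hc' hQ' Finset.inter_subset_right hwω
          (fun u hu v hv => hω2 u (hWY hu) v (hWY hv)) ?_ (fun p hp => (Finset.mem_filter.1 hp).2)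
        intro u hu v hv
        rcases hwQ u (hWY hu) v (hWY hv) with h | ⟨h1, h2⟩
        · exact Or.inl h
        · exact Or.inr ⟨Finset.mem_inter.2 ⟨h1, hu⟩, Finset.mem_inter.2 ⟨h2, hv⟩⟩
      · refine ih (Y \ W) w x₀ y δ (Q \ W) _ (by omega) (core_sdiff hc (by linarith)) ?_
          (Finset.sdiff_subset_sdiff hQY subset_rfl) hwω
          (fun u hu v hv => hω2 u (Finset.mem_sdiff.1 hu).1 v (Finset.mem_sdiff.1 hv).1) ?_
          (fun p hp => Finset.subset_sdiff.2
            ⟨hI p (Finset.mem_filter.1 hp).1, (Finset.mem_filter.1 hp).2.2⟩)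
        · refine ⟨Finset.mem_sdiff.2 ⟨hQ.root, (Finset.mem_sdiff.1
            (core_sdiff hc (by linarith)).mem).2⟩, Finset.mem_sdiff.2 ⟨hyQ, hyW⟩, ?_, ?_, ?_⟩
          · intro q hq
            obtain ⟨hq, hqW⟩ := Finset.mem_sdiff.1 hq
            exact hpred q hq (hxlt q hq hqW)
          · intro p hp q hq
            exact hQ.inj p (Finset.mem_sdiff.1 hp).1 q (Finset.mem_sdiff.1 hq).1
          · intro q hq hne
            obtain ⟨hq, hqW⟩ := Finset.mem_sdiff.1 hq
            obtain ⟨u, hu, hau, heu, hmu⟩ := hQ.pred q hq hne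
            refine ⟨u, Finset.mem_sdiff.2 ⟨hu, fun huW => ?_⟩, hau, heu,
              fun q' hq' => hmu q' (Finset.mem_sdiff.1 hq').1⟩
            have h1 := hxle u hu huW
            have h2 := hxlt q hq hqW
            have h3 := hc.pos _ _ hau
            linarith
        · intro u hu v hv
          obtain ⟨hu, huW⟩ := Finset.mem_sdiff.1 hu
          obtain ⟨hv, hvW⟩ := Finset.mem_sdiff.1 hv
          rcases hwQ u hu v hv with h | ⟨h1, h2⟩
          · exact Or.inl h
          · exact Or.inr ⟨Finset.mem_sdiff.2 ⟨h1, huW⟩, Finset.mem_sdiff.2 ⟨h2, hvW⟩⟩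
      · intro z hz
        obtain ⟨p, hp, h⟩ := hδ' z hz
        have := hQ.le p hp
        linarith
      · intro q hq
        by_cases hqW : q ∈ W
        · refine Or.inr ⟨Finset.mem_inter.2 ⟨hq, hqW⟩, ?_⟩
          rw [heq q hq hqW]
          linarith
        · exact Or.inl (Finset.mem_sdiff.2 ⟨hq, hqW⟩)
    · -- the petal is taken around a farthest vertex, and is disjoint from the spine
      push Not at hspec
      obtain ⟨P, hPY, hP⟩ := hc.exists_spine t₁ ht₁
      obtain ⟨r, hr0, hr1, hcut⟩ := exists_radius D hc hwω hP hPY hΔ (by linarith) hI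
      obtain ⟨x, y, hxP, hxW, hyP, hyW, hadj, hxy, hylow, hpred, hxle, hxlt, δ', hc', hP', heq,
        hδ'⟩ := petal_cluster hc hP hPY (r := r) (c := 1 / 2) hr0 (by linarith) (by norm_num)
          (by norm_num)
      set W := petal G w Y δ P t₁ r with hW
      have hWY : W ⊆ Y := petal_subset r
      have hQW : ∀ q ∈ Q, q ∉ W := fun q hq hqW => by
        have h1 := petal_low hc hqW
        have h2 := hQ.le q hq
        linarith
      have hcardW := Finset.card_pos.2 ⟨x, hxW⟩
      have hyZ : y ∈ Y \ W := Finset.mem_sdiff.2 ⟨hPY hyP, hyW⟩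
      have hcardZ : 0 < (Y \ W).card := Finset.card_pos.2 ⟨y, hyZ⟩
      have hcards := Finset.card_sdiff_add_card_eq_card hWY
      have hω : ω y x = δ x - δ y := by
        rcases hwQ y (hPY hyP) x (hPY hxP) with h | ⟨-, h⟩
        · linarith
        · exact absurd hxW (hQW x h)
      have hwW : ∀ u ∈ W, ∀ v ∈ W, w u v = ω u v := fun u hu v hv => by
        rcases hwQ u (hWY hu) v (hWY hv) with h | ⟨h, -⟩
        · exact h
        · exact absurd hu (hQW u h)
      refine Good.combine (QW := P ∩ W) (QZ := Q) (σ := 4 * δ y) (δ' := δ') (x := x) (y := y)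
        hωs hWY hxW hadj ?_ ?_ (Or.inr ⟨hyZ, rfl⟩) ?_ (fun q hq => Or.inl hq) hmax hI hcut
      · refine ih W (scaleOn P (1 / 2) w) x t₁ δ' (P ∩ W) _ (by omega) hc' hP'
          Finset.inter_subset_right ?_ ?_ ?_ (fun p hp => (Finset.mem_filter.1 hp).2)
        · intro u v h
          have h1 := hc.pos u v h
          have h2 := hwω u v h
          unfold scaleOn; split_ifs <;> linarith
        · intro u hu v hv h
          have h1 := hc.pos u v h
          have h2 := hwW u hu v hv
          unfold scaleOn; split_ifs <;> linarith
        · intro u hu v hv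
          by_cases h : u ∈ P ∧ v ∈ P
          · exact Or.inr ⟨Finset.mem_inter.2 ⟨h.1, hu⟩, Finset.mem_inter.2 ⟨h.2, hv⟩⟩
          · refine Or.inl ?_
            rw [← hwW u hu v hv]
            simp [scaleOn, h]
      · refine ih (Y \ W) w x₀ t₀ δ Q _ (by omega) (core_sdiff hc (by linarith)) hQ
          (fun q hq => Finset.mem_sdiff.2 ⟨hQY hq, hQW q hq⟩) hwω
          (fun u hu v hv => hω2 u (Finset.mem_sdiff.1 hu).1 v (Finset.mem_sdiff.1 hv).1)
          (fun u hu v hv => hwQ u (Finset.mem_sdiff.1 hu).1 v (Finset.mem_sdiff.1 hv).1)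
          (fun p hp => Finset.subset_sdiff.2
            ⟨hI p (Finset.mem_filter.1 hp).1, (Finset.mem_filter.1 hp).2.2⟩)
      · intro z hz
        obtain ⟨p, hp, h⟩ := hδ' z hz
        have := hc.pos _ _ hadj
        linarith

end Main

/-! ### Shortest-path distances and the deterministic tree -/

section Distance

variable {V : Type} {G : SimpleGraph V} {ω : Sym2 V → ℝ}

/-- The weight of an edge as a function of its two end points. -/
def ends (ω : Sym2 V → ℝ) (u v : V) : ℝ := ω s(u, v)

lemma ends_symm (u v : V) : ends ω u v = ends ω v u := by
  unfold ends; rw [Sym2.eq_swap]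

lemma rch_walk {Y : Set V} {a z : V} {s : ℝ} (h : Rch G (ends ω) Y a z s) :
    ∃ p : G.Walk a z, s = (p.edges.map ω).sum := by
  induction h with
  | refl _ => exact ⟨.nil, by simp⟩
  | step _ hadj _ ih =>
    obtain ⟨p, rfl⟩ := ih
    exact ⟨p.concat hadj, by simp [SimpleGraph.Walk.edges_concat, ends]⟩

lemma walk_rch {a z : V} (p : G.Walk a z) :
    Rch G (ends ω) Set.univ a z (p.edges.map ω).sum := by
  induction p with
  | nil => simpa using Rch.refl (G := G) (w := ends ω) (Set.mem_univ _)
  | cons h p ih =>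
    simpa [ends] using (Rch.single (w := ends ω) (Set.mem_univ _) (Set.mem_univ _) h).trans ih

lemma spDist_le (hω : ∀ e ∈ G.edgeSet, 0 < ω e) {Y : Set V} {a z : V} {s : ℝ}
    (h : Rch G (ends ω) Y a z s) : spDist G ω a z ≤ s := by
  refine csInf_le ⟨0, ?_⟩ (rch_walk h)
  rintro _ ⟨p, rfl⟩
  refine List.sum_nonneg fun x hx => ?_
  obtain ⟨e, he, rfl⟩ := List.mem_map.1 hx
  exact (hω e (p.edges_subset_edgeSet he)).le

lemma spDist_comm (u v : V) : spDist G ω u v = spDist G ω v u := by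
  unfold spDist
  congr 1
  ext x
  constructor <;> rintro ⟨p, rfl⟩ <;> exact ⟨p.reverse, by simp [List.sum_reverse]⟩

lemma spDist_core [Fintype V] (hG : G.Connected) (hω : ∀ e ∈ G.edgeSet, 0 < ω e) (x : V) :
    Core G (ends ω) Finset.univ x (spDist G ω x) := by
  have hconn : ∀ z, ∃ s, Rch G (ends ω) (Finset.univ : Finset V) x z s := fun z => by
    obtain ⟨p⟩ := hG.preconnected x z
    exact ⟨_, by simpa using walk_rch p⟩
  obtain ⟨δ, hδ, hglb⟩ := exists_core (Y := Finset.univ) (G := G) (w := ends ω)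
    (Finset.mem_univ x) (fun u v h => hω _ h) ends_symm (fun z _ => hconn z)
  have : δ = spDist G ω x := by
    funext z
    refine le_antisymm (le_csInf ?_ ?_) (hglb z (Finset.mem_univ _) _ fun s hs => spDist_le hω hs)
    · obtain ⟨p⟩ := hG.preconnected x z
      exact ⟨_, p, rfl⟩
    · rintro _ ⟨p, rfl⟩
      have := (walk_rch (ω := ω) p).lip (g := δ) fun u v _ _ h => hδ.lip u v (by simp) (by simp) h
      rwa [hδ.zero, zero_add] at this
  rwa [← this]

open Classical in
/-- The ball around `u` that has `v` on its boundary. -/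
noncomputable def ball [Fintype V] (G : SimpleGraph V) (ω : Sym2 V → ℝ) (u v : V) : Finset V :=
  Finset.univ.filter fun z => spDist G ω u z ≤ spDist G ω u v

/-- For every nonnegative weighting of the pairs some spanning tree has the required distortion on
average. -/
lemma exists_tree [Fintype V] [DecidableEq V] (hG : G.Connected) (hω : ∀ e ∈ G.edgeSet, 0 < ω e)
    (a : {p : V × V // p.1 ≠ p.2} → ℝ) (ha : ∀ p, 0 ≤ a p) :
    ∃ T, T ≤ G ∧ T.IsTree ∧ ∑ p, a p * spDist T ω p.1.1 p.1.2 ≤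
      ∑ p, a p * (102400 * spDist G ω p.1.1 p.1.2 *
        (1 + lr Finset.univ (ball G ω p.1.1 p.1.2)) ^ 2) := by
  have hcore := spDist_core hG hω
  let D : Demands G (ends ω) {p : V × V // p.1 ≠ p.2} :=
    { B := fun p => ball G ω p.1.1 p.1.2
      u := fun p => p.1.1
      v := fun p => p.1.2
      d := fun p => spDist G ω p.1.1 p.1.2
      a := a
      hu := fun p => by
        have := (hcore p.1.1).nonneg (Finset.mem_univ p.1.2)
        simpa [ball, (hcore p.1.1).zero] using this
      hv := fun p => by simp [ball]
      hne := fun p => p.2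
      hd := fun p => (hcore p.1.1).pos_of_ne _ (Finset.mem_univ _) p.2.symm
      ha := ha
      conn := fun p z hz z' hz' => by
        have h1 : spDist G ω p.1.1 z ≤ spDist G ω p.1.1 p.1.2 := by simpa [ball] using hz
        have h2 : spDist G ω p.1.1 z' ≤ spDist G ω p.1.1 p.1.2 := by simpa [ball] using hz'
        have r1 := (hcore p.1.1).rch_ball _ z (Finset.mem_univ _) h1
        have r2 := (hcore p.1.1).rch_ball _ z' (Finset.mem_univ _) h2
        refine ⟨_, by linarith, ((r1.symm ends_symm).trans r2).mono (fun _ _ h => h) ?_⟩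
        intro v hv
        simpa [ball] using hv.2 }
  obtain ⟨x₀⟩ := hG.nonempty
  obtain ⟨T, hT, hcard, hreach, -, cost, hcost, hsum⟩ := exists_good D ends_symm (Fintype.card V)
    Finset.univ (ends ω) x₀ x₀ (spDist G ω x₀) {x₀} Finset.univ (by simp) (hcore x₀)
    ⟨by simp, by simp, by simp, by simp, by simp⟩ (by simp) (fun _ _ _ => le_rfl)
    (fun u _ v _ h => by linarith [(hcore x₀).pos u v h]) (fun _ _ _ _ => Or.inl rfl) (by simp)
  have hTω : ∀ e ∈ T.edgeSet, 0 < ω e := fun e he => hω e (SimpleGraph.edgeSet_mono hT he)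
  have hTc : T.Connected := by
    have hx : ∀ z, T.Reachable x₀ z := fun z => by
      obtain ⟨s, -, hs⟩ := hreach z (Finset.mem_univ _)
      obtain ⟨p, -⟩ := rch_walk hs
      exact ⟨p⟩
    have : Nonempty V := ⟨x₀⟩
    exact ⟨fun u v => (hx u).symm.trans (hx v)⟩
  refine ⟨T, hT, ?_, ?_⟩
  · rw [SimpleGraph.isTree_iff_connected_and_card]
    refine ⟨hTc, le_antisymm ?_ hTc.card_vert_le_card_edgeSet_add_one⟩
    rw [Nat.card_coe_set_eq, Nat.card_eq_fintype_card]
    simpa using hcard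
  · calc _ ≤ ∑ p, a p * cost p := by
          refine Finset.sum_le_sum fun p hp => mul_le_mul_of_nonneg_left ?_ (ha p)
          obtain ⟨s, hs, hR⟩ := hcost p hp
          exact (spDist_le hTω hR).trans hs
      _ ≤ _ := hsum
      _ = _ := by
          rw [Finset.mul_sum]
          exact Finset.sum_congr rfl fun p _ => by simp only [D]; ring

end Distance

/-! ### Minimax -/

/-- A finite minimax principle: if every nonnegative combination of the coordinates admits a vector
`X k` satisfying the combined bound, then some convex combination satisfies all bounds. -/
lemma minimax {κ ι : Type} [Fintype κ] [Fintype ι] (X : κ → ι → ℝ) (b : ι → ℝ)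
    (h : ∀ a : ι → ℝ, (∀ p, 0 ≤ a p) → ∃ k, ∑ p, a p * X k p ≤ ∑ p, a p * b p) :
    ∃ μ : κ → ℝ, (∀ k, 0 ≤ μ k) ∧ ∑ k, μ k = 1 ∧ ∀ p, ∑ k, μ k * X k p ≤ b p := by
  classical
  let F : (κ → ℝ) →ₗ[ℝ] (ι → ℝ) :=
    { toFun := fun μ p => ∑ k, μ k * X k p
      map_add' := fun μ ν => by
        funext p; simp [add_mul, Finset.sum_add_distrib]
      map_smul' := fun c μ => by
        funext p; simp [Finset.mul_sum, mul_assoc] }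
  have hF : Continuous F := F.continuous_of_finiteDimensional
  by_cases hdis : Disjoint (F '' stdSimplex ℝ κ) (Set.Iic b)
  · exfalso
    obtain ⟨f, s, t, hs, hst, ht⟩ := geometric_hahn_banach_compact_closed
      ((convex_stdSimplex ℝ κ).linear_image F) ((isCompact_stdSimplex ℝ κ).image hF)
      (convex_Iic b) isClosed_Iic hdis
    have hf : ∀ x, f x = ∑ p, x p * f (Pi.single p 1) := fun x => by
      conv_lhs => rw [pi_eq_sum_univ' x]
      simp [map_sum]
    -- the functional is nonpositive on unit vectors, being bounded below on the orthant below `b`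
    have hneg : ∀ p, f (Pi.single p 1) ≤ 0 := by
      intro p
      by_contra! hp
      have hb := ht b (Set.mem_Iic.2 le_rfl)
      have := ht (b - ((f b - t) / f (Pi.single p 1)) • Pi.single p 1) (by
        refine Set.mem_Iic.2 (sub_le_self _ (smul_nonneg ?_ ?_))
        · exact div_nonneg (by linarith) hp.le
        · exact Pi.single_nonneg.2 zero_le_one)
      rw [map_sub, map_smul, smul_eq_mul, div_mul_cancel₀ _ hp.ne'] at this
      linarith
    obtain ⟨k, hk⟩ := h (fun p => - f (Pi.single p 1)) (fun p => by linarith [hneg p])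
    have h1 := hs (X k) ⟨Pi.single k 1, single_mem_stdSimplex ℝ k, by
      funext p; simp [F, Pi.single_apply]⟩
    have h2 := ht b (Set.mem_Iic.2 le_rfl)
    rw [hf] at h1 h2
    simp only [neg_mul, Finset.sum_neg_distrib, mul_comm (f _)] at hk
    linarith
  · obtain ⟨_, ⟨μ, hμ, rfl⟩, hb⟩ := Set.not_disjoint_iff.1 hdis
    exact ⟨μ, hμ.1, hμ.2, fun p => hb p⟩

/-! ### Counting small balls -/

section Counting

variable {V : Type} [Fintype V] {G : SimpleGraph V} {ω : Sym2 V → ℝ}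

open Classical in
/-- At most a proportion `ε` of the points around `u` lie on the boundary of a ball with fewer than
`ε n` points: the largest such ball contains all of them. -/
lemma card_small_balls (hG : G.Connected) (hω : ∀ e ∈ G.edgeSet, 0 < ω e) {ε : ℝ} (hε : 0 < ε)
    (hε1 : ε ≤ 1) (u : V) :
    ((Finset.univ.filter fun v => v ≠ u ∧ ((ball G ω u v).card : ℝ) < ε * Fintype.card V).card : ℝ)
      ≤ ε * (Fintype.card V - 1) := by
  set S := Finset.univ.filter fun v => v ≠ u ∧ ((ball G ω u v).card : ℝ) < ε * Fintype.card V
    with hS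
  rcases S.eq_empty_or_nonempty with h | h
  · have : (1 : ℝ) ≤ Fintype.card V := by
      exact_mod_cast Fintype.card_pos_iff.2 ⟨u⟩
    rw [h]
    simp only [Finset.card_empty, Nat.cast_zero]
    exact mul_nonneg hε.le (by linarith)
  · obtain ⟨v, hv, hmax⟩ := Finset.exists_max_image S (spDist G ω u) h
    have hu : u ∉ S := by simp [hS]
    have hc := spDist_core hG hω u
    have hsub : insert u S ⊆ ball G ω u v := by
      refine Finset.insert_subset ?_ fun z hz => ?_
      · have := hc.nonneg (Finset.mem_univ v)
        simpa [ball, hc.zero] using this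
      · simpa [ball] using hmax z hz
    have h1 := Finset.card_le_card hsub
    rw [Finset.card_insert_of_notMem hu] at h1
    have h2 : ((S.card : ℝ) + 1) ≤ (ball G ω u v).card := by exact_mod_cast h1
    have h3 := (Finset.mem_filter.1 hv).2.2
    linarith

open Classical in
lemma card_large_balls (hG : G.Connected) (hω : ∀ e ∈ G.edgeSet, 0 < ω e) {ε : ℝ} (hε : 0 < ε)
    (hε1 : ε ≤ 1) :
    (1 - ε) * (Fintype.card V : ℝ) * ((Fintype.card V : ℝ) - 1) ≤
      ({p : V × V | p.1 ≠ p.2 ∧ ε * Fintype.card V ≤ (ball G ω p.1 p.2).card}.ncard : ℝ) := by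
  have e : {p : V × V | p.1 ≠ p.2 ∧ ε * Fintype.card V ≤ (ball G ω p.1 p.2).card}.ncard =
      ∑ u : V, (Finset.univ.filter fun v => u ≠ v ∧
        ε * Fintype.card V ≤ (ball G ω u v).card).card := by
    rw [Set.ncard_eq_toFinset_card', Set.toFinset_ofPred, Finset.card_filter, Fintype.sum_prod_type]
    exact Finset.sum_congr rfl fun u _ => (Finset.card_filter _ _).symm
  rw [e, Nat.cast_sum]
  have hu : ∀ u ∈ (Finset.univ : Finset V), (1 - ε) * ((Fintype.card V : ℝ) - 1) ≤
      ((Finset.univ.filter fun v => u ≠ v ∧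
        ε * Fintype.card V ≤ (ball G ω u v).card).card : ℝ) := by
    intro u _
    have h1 := card_small_balls hG hω hε hε1 u
    have h2 : Fintype.card V ≤ (Finset.univ.filter fun v => u ≠ v ∧
        ε * Fintype.card V ≤ (ball G ω u v).card).card + (Finset.univ.filter fun v => v ≠ u ∧
          ((ball G ω u v).card : ℝ) < ε * Fintype.card V).card + 1 := by
      rw [← Finset.card_univ, ← Finset.card_singleton u]
      refine (Finset.card_le_card ?_).trans ((Finset.card_union_le _ _).trans
        (Nat.add_le_add_right (Finset.card_union_le _ _) _))
      intro v _
      simp only [Finset.mem_union, Finset.mem_filter, Finset.mem_univ, true_and,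
        Finset.mem_singleton]
      by_cases hv : v = u
      · exact Or.inr hv
      · rcases le_or_gt (ε * Fintype.card V) ((ball G ω u v).card : ℝ) with h | h
        · exact Or.inl (Or.inl ⟨Ne.symm hv, h⟩)
        · exact Or.inl (Or.inr ⟨hv, h⟩)
    have h3 : (Fintype.card V : ℝ) ≤ (Finset.univ.filter fun v => u ≠ v ∧
        ε * Fintype.card V ≤ (ball G ω u v).card).card + (Finset.univ.filter fun v => v ≠ u ∧
          ((ball G ω u v).card : ℝ) < ε * Fintype.card V).card + 1 := by exact_mod_cast h2
    linarith
  refine le_trans (le_of_eq ?_) (Finset.sum_le_sum hu)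
  simp
  ring

/-- Balls with at least `ε n` points have logarithmic ratio at most `log (1 / ε)`. -/
lemma lr_ball_le {ε : ℝ} (hε : 0 < ε) {u v : V}
    (h : ε * Fintype.card V ≤ (ball G ω u v).card) :
    lr Finset.univ (ball G ω u v) ≤ Real.log (1 / ε) := by
  have hn : (0 : ℝ) < Fintype.card V := by exact_mod_cast Fintype.card_pos_iff.2 ⟨u⟩
  have hb : (0 : ℝ) < (ball G ω u v).card := lt_of_lt_of_le (by positivity) h
  unfold lr
  rw [Finset.card_univ]
  refine Real.log_le_log (by positivity) ?_
  rw [div_le_div_iff₀ hb hε]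
  linarith

end Counting

end PST

/-- There is a universal constant `C` such that every finite
connected weighted graph on `n ≥ 2` vertices (positive edge weights) admits a
finitely supported probability distribution over spanning trees (given by trees
`T i` and weights `w i` summing to `1`) with scaling expected distortion
`Õ(log²(1/ε))`: for every `ε ∈ (0,1]` there is a symmetric set `P` of ordered
pairs of distinct vertices with `|P| ≥ (1−ε)·n(n−1)` (i.e. at least a `(1−ε)`
fraction of unordered pairs) such that every `(u,v) ∈ P` has
`E_T[d_T(u,v)] ≤ C·L²·(1+ln L)²·(1+ln(1+ln L))²·d_G(u,v)` where
`L = 1 + ln(1/ε)`. -/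
theorem probabilistic_spanning_tree_scaling :
    ∃ C : ℝ, ∀ (V : Type) [Fintype V] (G : SimpleGraph V),
      G.Connected → 2 ≤ Fintype.card V →
      ∀ ω : Sym2 V → ℝ, (∀ e ∈ G.edgeSet, 0 < ω e) →
      ∃ (k : ℕ) (T : Fin k → SimpleGraph V) (w : Fin k → ℝ),
        (∀ i, 0 ≤ w i) ∧ (∑ i, w i = 1) ∧
        (∀ i, T i ≤ G ∧ (T i).IsTree) ∧
        ∀ ε ∈ Set.Ioc (0 : ℝ) 1, ∃ P : Set (V × V),
          (∀ p ∈ P, p.1 ≠ p.2) ∧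
          (∀ p : V × V, p ∈ P → (p.2, p.1) ∈ P) ∧
          (1 - ε) * (Fintype.card V : ℝ) * ((Fintype.card V : ℝ) - 1)
            ≤ (Set.ncard P : ℝ) ∧
          ∀ p ∈ P,
            (∑ i, w i * spDist (T i) ω p.1 p.2)
              ≤ C * (1 + Real.log (1/ε)) ^ 2
                  * (1 + Real.log (1 + Real.log (1/ε))) ^ 2
                  * (1 + Real.log (1 + Real.log (1 + Real.log (1/ε)))) ^ 2
                  * spDist G ω p.1 p.2 := by
  classical
  refine ⟨102400, fun V _ G hG _ ω hω => ?_⟩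
  obtain ⟨μ, hμ0, hμ1, hμ⟩ := PST.minimax
    (κ := {T : SimpleGraph V // T ≤ G ∧ T.IsTree}) (ι := {p : V × V // p.1 ≠ p.2})
    (fun T p => spDist T.1 ω p.1.1 p.1.2)
    (fun p => 102400 * spDist G ω p.1.1 p.1.2 *
      (1 + PST.lr Finset.univ (PST.ball G ω p.1.1 p.1.2)) ^ 2)
    (fun a ha => by
      obtain ⟨T, h1, h2, h3⟩ := PST.exists_tree hG hω a ha
      exact ⟨⟨T, h1, h2⟩, h3⟩)
  let e := Fintype.equivFin {T : SimpleGraph V // T ≤ G ∧ T.IsTree}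
  refine ⟨_, fun i => (e.symm i).1, fun i => μ (e.symm i), fun i => hμ0 _, ?_,
    fun i => (e.symm i).2, ?_⟩
  · rw [← hμ1]; exact Equiv.sum_comp e.symm μ
  rintro ε ⟨hε, hε1⟩
  have hL : 0 ≤ Real.log (1 / ε) := Real.log_nonneg ((one_le_div hε).2 hε1)
  have hL2 : 0 ≤ Real.log (1 + Real.log (1 / ε)) := Real.log_nonneg (by linarith)
  have hL3 : 0 ≤ Real.log (1 + Real.log (1 + Real.log (1 / ε))) := Real.log_nonneg (by linarith)
  have key : ∀ u v : V, u ≠ v → ε * Fintype.card V ≤ (PST.ball G ω u v).card →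
      (∑ i, μ (e.symm i) * spDist (e.symm i).1 ω u v)
              ≤ 102400 * (1 + Real.log (1/ε)) ^ 2
                  * (1 + Real.log (1 + Real.log (1/ε))) ^ 2
                  * (1 + Real.log (1 + Real.log (1 + Real.log (1/ε)))) ^ 2
                  * spDist G ω u v := by
    intro u v huv hb
    have h1 := hμ ⟨(u, v), huv⟩
    have h2 : ∑ i, μ (e.symm i) * spDist (e.symm i).1 ω u v =
        ∑ T : {T : SimpleGraph V // T ≤ G ∧ T.IsTree}, μ T * spDist T.1 ω u v :=
      Equiv.sum_comp e.symm fun T => μ T * spDist T.1 ω u v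
    rw [h2]
    refine h1.trans ?_
    have h3 := PST.lr_ball_le hε hb
    have h4 := PST.lr_nonneg (Finset.subset_univ (PST.ball G ω u v))
    have h5 := (PST.spDist_core hG hω u).nonneg (Finset.mem_univ v)
    have h6 : (1 + PST.lr Finset.univ (PST.ball G ω u v)) ^ 2 ≤ (1 + Real.log (1 / ε)) ^ 2 := by
      gcongr
    have h7 : 1 ≤ (1 + Real.log (1 + Real.log (1 / ε))) ^ 2 := one_le_pow₀ (by linarith)
    have h8 : 1 ≤ (1 + Real.log (1 + Real.log (1 + Real.log (1 / ε)))) ^ 2 :=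
      one_le_pow₀ (by linarith)
    calc _ ≤ 102400 * spDist G ω u v * (1 + Real.log (1 / ε)) ^ 2 := by gcongr
      _ = 102400 * (1 + Real.log (1 / ε)) ^ 2 * 1 * 1 * spDist G ω u v := by ring
      _ ≤ _ := by gcongr
  refine ⟨{p | p.1 ≠ p.2 ∧ (ε * Fintype.card V ≤ (PST.ball G ω p.1 p.2).card ∨
    ε * Fintype.card V ≤ (PST.ball G ω p.2 p.1).card)}, fun p hp => hp.1,
    fun p hp => ⟨hp.1.symm, hp.2.symm⟩, ?_, ?_⟩
  · refine (PST.card_large_balls hG hω hε hε1).trans ?_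
    refine Nat.cast_le.2 (Set.ncard_le_ncard ?_ (Set.toFinite _))
    exact fun p hp => ⟨hp.1, Or.inl hp.2⟩
  · rintro ⟨u, v⟩ ⟨huv, hb | hb⟩
    · exact key u v huv hb
    · have := key v u huv.symm hb
      simpa only [PST.spDist_comm v u] using this
end

section
/- Let (W,d) be a finite pseudometric space with |W| ≥ 1, u ∈ W, and let n ∈ ℕ with n ≥ |W|, Λ̂ > 0, θ ≥ 0, β > 0, and ε_lim ∈ (0,1] with |W| ≤ ε_lim·β·n. Let C = 8·√(44e), write B(u,r) = {w ∈ W : d(u,w) ≤ r}, and set ε̂ = sup{ε ∈ (0, ε_lim] : |B(u,(θ + √ε/(4C))·Λ̂)| ≥ ε·β·n}. Then the set Q = {w ∈ W : (θ + √ε̂/(4C))·Λ̂ ≤ d(u,w) < (θ + √ε̂/(2C))·Λ̂} satisfies |Q| ≤ 4·ε̂·β·n. -/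
/-!
The radius defining the ball at parameter `4 * ε̂` is exactly the outer radius of the shell at `ε̂`,
because `√(4 * ε̂) = 2 * √ε̂`. So if the shell had more than `4 * ε̂ * β * n` points, then so would
that ball. When `4 * ε̂ ≤ εlim` this makes `4 * ε̂` admissible, contradicting that the positive
number `ε̂` is the supremum of the admissible parameters; when `4 * ε̂ > εlim` it contradicts
`|W| ≤ εlim * β * n`. Positivity of `ε̂` holds because `1 / (β * n)` is admissible: every ball
around `u` contains `u`.
-/


/-- The paper's constant `C = 8·√(c·ĉ)` with `c = 2e`, `ĉ = 22`, i.e.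
`C = 8·√(44e)`. -/
noncomputable def decomposeConst : ℝ := 8 * Real.sqrt (44 * Real.exp 1)

/-- Claim 7 of the paper, Case 1 shell bound.  Let `(W,d)`
be a finite pseudometric space with `|W| ≥ 1`, `u ∈ W`, `n ≥ |W|`, `Λ̂ > 0`,
`θ ≥ 0`, `β > 0`, `ε_lim ∈ (0,1]` with `|W| ≤ ε_lim·β·n`.  With
`C = 8√(44e)` and
`ε̂ = sup{ε ∈ (0,ε_lim] : |B(u,(θ+√ε/(4C))·Λ̂)| ≥ ε·β·n}`, the shell
`Q = {w : (θ+√ε̂/(4C))·Λ̂ ≤ d(u,w) < (θ+√ε̂/(2C))·Λ̂}` satisfies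
`|Q| ≤ 4·ε̂·β·n`. -/
theorem decompose_shell_bound
    {W : Type*} [PseudoMetricSpace W] [Fintype W] (u : W)
    (hW1 : 1 ≤ Fintype.card W)
    (n : ℕ) (hn : Fintype.card W ≤ n)
    (Λ : ℝ) (hΛ : 0 < Λ) (θ : ℝ) (hθ : 0 ≤ θ) (β : ℝ) (hβ : 0 < β)
    (εlim : ℝ) (hεlim : εlim ∈ Set.Ioc (0 : ℝ) 1)
    (hWn : (Fintype.card W : ℝ) ≤ εlim * β * (n : ℝ))
    (εh : ℝ)
    (hεh : εh = sSup {ε : ℝ | ε ∈ Set.Ioc (0 : ℝ) εlim ∧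
      ε * β * (n : ℝ) ≤ (Set.ncard (Metric.closedBall u
        ((θ + Real.sqrt ε / (4 * decomposeConst)) * Λ)) : ℝ)}) :
    (Set.ncard {w : W |
        (θ + Real.sqrt εh / (4 * decomposeConst)) * Λ ≤ dist u w ∧
        dist u w < (θ + Real.sqrt εh / (2 * decomposeConst)) * Λ} : ℝ)
      ≤ 4 * εh * β * (n : ℝ) := by
  have hn0 : (0 : ℝ) < n := by exact_mod_cast lt_of_lt_of_le hW1 hn
  have hβn : 0 < β * n := mul_pos hβ hn0
  have hC : 0 < decomposeConst := by unfold decomposeConst; positivity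
  have hW1' : (1 : ℝ) ≤ Fintype.card W := by exact_mod_cast hW1
  set S := {ε : ℝ | ε ∈ Set.Ioc (0 : ℝ) εlim ∧
      ε * β * (n : ℝ) ≤ (Set.ncard (Metric.closedBall u
        ((θ + Real.sqrt ε / (4 * decomposeConst)) * Λ)) : ℝ)} with hS
  have hbdd : BddAbove S := ⟨εlim, fun ε hε => hε.1.2⟩
  have hmem : 1 / (β * n) ∈ S := by
    refine ⟨⟨by positivity, ?_⟩, ?_⟩
    · rw [div_le_iff₀ hβn]
      linarith
    · have h1 : 1 / (β * n) * β * (n : ℝ) = 1 := by field_simp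
      rw [h1]
      have h2 : 0 < Set.ncard (Metric.closedBall u
          ((θ + Real.sqrt (1 / (β * n)) / (4 * decomposeConst)) * Λ)) := by
        rw [Set.ncard_pos (Set.toFinite _)]
        exact ⟨u, Metric.mem_closedBall_self (by positivity)⟩
      exact_mod_cast h2
  have hpos : 0 < εh := by
    rw [hεh]
    exact lt_of_lt_of_le (by positivity) (le_csSup hbdd hmem)
  by_contra! hlt
  rcases le_or_gt (4 * εh) εlim with hle | hgt
  · have hsqrt : Real.sqrt (4 * εh) = 2 * Real.sqrt εh := by
      rw [Real.sqrt_mul (by norm_num), show (4 : ℝ) = 2 ^ 2 by norm_num,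
        Real.sqrt_sq (by norm_num)]
    have hrad : Real.sqrt (4 * εh) / (4 * decomposeConst)
        = Real.sqrt εh / (2 * decomposeConst) := by
      rw [hsqrt]
      field_simp
      norm_num
    have h4 : 4 * εh ∈ S := by
      refine ⟨⟨by positivity, hle⟩, hlt.le.trans ?_⟩
      rw [hrad]
      refine Nat.cast_le.mpr (Set.ncard_le_ncard (fun w hw => ?_) (Set.toFinite _))
      rw [Metric.mem_closedBall']
      exact hw.2.le
    have := le_csSup hbdd h4
    rw [← hεh] at this
    linarith
  · have hcard : (Set.ncard {w : W |
        (θ + Real.sqrt εh / (4 * decomposeConst)) * Λ ≤ dist u w ∧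
        dist u w < (θ + Real.sqrt εh / (2 * decomposeConst)) * Λ} : ℝ) ≤ Fintype.card W := by
      rw [← Nat.card_eq_fintype_card]
      exact_mod_cast Set.ncard_le_card _
    have := mul_lt_mul_of_pos_right hgt hβn
    linarith
end

section
/- Let (W,d) be a finite pseudometric space with |W| ≥ 1, u ∈ W, and let n ∈ ℕ with n ≥ |W|, Λ̂ > 0, θ ≥ 0, β > 0, and ε_lim ∈ (0,1] with |W| ≤ ε_lim·β·n. Let C = 8·√(44e), write B(u,r) = {w ∈ W : d(u,w) ≤ r}, and set ε̂ = sup{ε ∈ (0, ε_lim] : |B(u,(θ + √ε/(4C))·Λ̂)| ≥ ε·β·n}. Then there exists r in the interval [(θ + (1/4+1/25)·√ε̂/C)·Λ̂, (θ + (1/2−1/25)·√ε̂/C)·Λ̂] such that for every ε ∈ (0, 32·ε̂], the number of points w ∈ W with |d(u,w) − r| ≤ √ε·Λ̂/(150·C) is at most √(ε·ε̂/2)·n·β. -/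
open Classical in
/-- A one-dimensional maximal inequality for the counting measure of a finite family of reals `f`:
if at most `M` values lie in the `R`-neighbourhood of `[a, b]`, and `M` is small compared with
`K * (b - a)`, then some centre in `[a, b]` has at most `K * ρ` values within `ρ`,
for all `ρ ∈ (0, R]` at once. -/
lemma exists_radius_card_le {W : Type*} [Fintype W] (f : W → ℝ) (a b R K M τ : ℝ)
    (hab : a ≤ b) (hK : 0 < K) (hτ : 3 < τ)
    (hM : ((Finset.univ.filter fun w => f w ∈ Set.Icc (a - R) (b + R)).card : ℝ) ≤ M)
    (hMK : 2 * τ * M < K * (b - a)) :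
    ∃ r ∈ Set.Icc a b, ∀ ρ ∈ Set.Ioc (0 : ℝ) R,
      ((Finset.univ.filter fun w => |f w - r| ≤ ρ).card : ℝ) ≤ K * ρ := by
  by_contra! hcon
  choose! ρ hρ hbad using hcon
  obtain ⟨v, hvI, hdisj, hcov⟩ := Vitali.exists_disjoint_subfamily_covering_enlargement_closedBall
    (Set.Icc a b) (fun s : ℝ => s) ρ R (fun s hs => (hρ s hs).2) τ hτ
  -- Each selected ball catches a value of `f`, and the balls are disjoint, so there are finitely
  -- many of them.
  have hcatch : ∀ s ∈ v, ∃ w, |f w - s| ≤ ρ s := by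
    intro s hs
    have h1 := hbad s (hvI hs)
    have h2 : 0 < K * ρ s := mul_pos hK (hρ s (hvI hs)).1
    have h3 : 0 < (Finset.univ.filter fun w => |f w - s| ≤ ρ s).card := by
      exact_mod_cast h2.trans h1
    obtain ⟨w, hw⟩ := Finset.card_pos.1 h3
    exact ⟨w, by simpa using hw⟩
  have huniq : ∀ s ∈ v, ∀ s' ∈ v, ∀ w, |f w - s| ≤ ρ s → |f w - s'| ≤ ρ s' → s = s' := by
    intro s hs s' hs' w h1 h2
    by_contra hne
    exact Set.disjoint_left.1 (hdisj hs hs' hne)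
      (show f w ∈ Metric.closedBall s (ρ s) by simpa [Real.dist_eq] using h1)
      (by simpa [Real.dist_eq] using h2)
  have hfin : v.Finite := by
    have : Nonempty W :=
      let ⟨s, hs, _⟩ := hcov a ⟨le_rfl, hab⟩
      let ⟨w, _⟩ := hcatch s hs
      ⟨w⟩
    choose! g hg using hcatch
    refine Set.Finite.of_injOn (f := g) (t := Set.univ) (fun _ _ => Set.mem_univ _) ?_
      Set.finite_univ
    intro s hs s' hs' h
    exact huniq s hs s' hs' (g s) (hg s hs) (h ▸ hg s' hs')
  set F := hfin.toFinset with hF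
  have hFv : ∀ s, s ∈ F ↔ s ∈ v := fun s => hfin.mem_toFinset
  have hcount : ∑ s ∈ F, ((Finset.univ.filter fun w => |f w - s| ≤ ρ s).card : ℝ) ≤ M := by
    refine le_trans ?_ hM
    rw [← Nat.cast_sum, ← Finset.card_biUnion]
    · refine Nat.cast_le.2 (Finset.card_le_card ?_)
      intro w hw
      simp only [Finset.mem_biUnion, Finset.mem_filter, Finset.mem_univ, true_and] at hw ⊢
      obtain ⟨s, hs, hw⟩ := hw
      have hs' := hvI ((hFv s).1 hs)
      have h1 := (hρ s hs').2
      rw [abs_le] at hw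
      exact ⟨by linarith [hs'.1], by linarith [hs'.2]⟩
    · intro s hs s' hs' hne
      refine Finset.disjoint_left.2 fun w h1 h2 => hne ?_
      exact huniq s ((hFv s).1 hs) s' ((hFv s').1 hs') w (by simpa using h1) (by simpa using h2)
  have hKsum : K * ∑ s ∈ F, ρ s ≤ M := by
    rw [Finset.mul_sum]
    exact (Finset.sum_le_sum fun s hs => (hbad s (hvI ((hFv s).1 hs))).le).trans hcount
  have hρ0 : ∀ s ∈ F, 0 ≤ 2 * (τ * ρ s) := fun s hs => by
    have := (hρ s (hvI ((hFv s).1 hs))).1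
    positivity
  have hlen : b - a ≤ ∑ s ∈ F, 2 * (τ * ρ s) := by
    have hsub : Set.Icc a b ⊆ ⋃ s ∈ F, Metric.closedBall s (τ * ρ s) := by
      intro s hs
      obtain ⟨s', hs', hss⟩ := hcov s hs
      exact Set.mem_biUnion ((hFv s').2 hs') (hss (Metric.mem_closedBall_self (hρ s hs).1.le))
    have h1 := (MeasureTheory.measure_mono (μ := MeasureTheory.volume) hsub).trans
      (MeasureTheory.measure_biUnion_finset_le F _)
    simp only [Real.volume_Icc, Real.volume_closedBall] at h1
    rw [← ENNReal.ofReal_sum_of_nonneg hρ0] at h1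
    exact (ENNReal.ofReal_le_ofReal_iff (Finset.sum_nonneg hρ0)).1 h1
  have h2 : ∑ s ∈ F, 2 * (τ * ρ s) = 2 * τ * ∑ s ∈ F, ρ s := by
    rw [Finset.mul_sum]
    exact Finset.sum_congr rfl fun s _ => by ring
  have h3 : K * (b - a) ≤ 2 * τ * (K * ∑ s ∈ F, ρ s) := by
    rw [h2] at hlen
    calc K * (b - a) ≤ K * (2 * τ * ∑ s ∈ F, ρ s) := by gcongr
      _ = _ := by ring
  have h4 : 2 * τ * (K * ∑ s ∈ F, ρ s) ≤ 2 * τ * M := by gcongr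
  linarith

open Classical in
/-- The annulus bound: for the extremal `ε̂`, at most `3·ε̂·β·n` points have a distance from `u`
strictly above `θΛ + L/4` and at most `θΛ + L/2`, where `L = √ε̂·Λ/C`. The constant `C` enters only
through its positivity. -/
lemma annulus_card_le {W : Type*} [PseudoMetricSpace W] [Fintype W] (u : W)
    (n : ℕ) (Λ θ β εlim εh C : ℝ) (hΛ : 0 < Λ) (hC : 0 < C) (hθ : 0 ≤ θ) (hβ : 0 < β)
    (hW1 : 1 ≤ Fintype.card W) (hn : 0 < (n : ℝ))
    (hWn : (Fintype.card W : ℝ) ≤ εlim * β * (n : ℝ))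
    (hεh : εh = sSup {ε : ℝ | ε ∈ Set.Ioc (0 : ℝ) εlim ∧
      ε * β * (n : ℝ) ≤ (Set.ncard (Metric.closedBall u
        ((θ + Real.sqrt ε / (4 * C)) * Λ)) : ℝ)}) :
    0 < εh ∧ ((Finset.univ.filter fun w => dist w u ∈ Set.Ioc
      ((θ + Real.sqrt εh / (4 * C)) * Λ) ((θ + 2 * Real.sqrt εh / (4 * C)) * Λ)).card : ℝ)
        ≤ 3 * (εh * β * n) := by
  set S := {ε : ℝ | ε ∈ Set.Ioc (0 : ℝ) εlim ∧
      ε * β * (n : ℝ) ≤ (Set.ncard (Metric.closedBall u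
        ((θ + Real.sqrt ε / (4 * C)) * Λ)) : ℝ)} with hS
  have hβn : 0 < β * n := mul_pos hβ hn
  have hbdd : BddAbove S := ⟨εlim, fun ε h => h.1.2⟩
  have hle : ∀ ε ∈ S, ε ≤ εh := fun ε h => hεh ▸ le_csSup hbdd h
  -- A single point, `u` itself, already witnesses `1 / (β n)`.
  have hmem : 1 / (β * n) ∈ S := by
    refine ⟨⟨by positivity, ?_⟩, ?_⟩
    · rw [div_le_iff₀ hβn]
      have : (1 : ℝ) ≤ Fintype.card W := by exact_mod_cast hW1
      linarith
    · have h1 : 1 / (β * n) * β * n = 1 := by field_simp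
      rw [h1]
      have h2 : 0 < (Metric.closedBall u
          ((θ + Real.sqrt (1 / (β * n)) / (4 * C)) * Λ)).ncard :=
        (Set.ncard_pos (Set.toFinite _)).2 ⟨u, Metric.mem_closedBall_self (by positivity)⟩
      exact_mod_cast h2
  have hpos : 0 < εh := lt_of_lt_of_le (by positivity) (hle _ hmem)
  refine ⟨hpos, ?_⟩
  have hcard : ∀ x : ℝ, (Metric.closedBall u x).ncard
      = (Finset.univ.filter fun w => dist w u ≤ x).card := by
    intro x
    rw [← Set.ncard_coe_finset]
    congr 1
    ext w
    simp
  -- The balls for `ε' ≤ ε̂` lie inside the ball for `ε̂`, so the supremum satisfies the bound too.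
  have hlow : εh * β * n ≤ (Metric.closedBall u ((θ + Real.sqrt εh / (4 * C)) * Λ)).ncard := by
    rw [mul_assoc, ← le_div_iff₀ hβn]
    refine le_of_forall_lt fun ε hε => ?_
    rw [hεh] at hε
    obtain ⟨ε', hε'S, hlt⟩ := exists_lt_of_lt_csSup ⟨_, hmem⟩ hε
    rw [lt_div_iff₀ hβn]
    calc ε * (β * n) < ε' * (β * n) := by gcongr
      _ = ε' * β * n := by ring
      _ ≤ _ := hε'S.2
      _ ≤ _ := by
        refine Nat.cast_le.2 (Set.ncard_le_ncard (Metric.closedBall_subset_closedBall ?_)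
          (Set.toFinite _))
        have := hle _ hε'S
        gcongr
  have hsqrt : Real.sqrt (4 * εh) = 2 * Real.sqrt εh := by
    rw [Real.sqrt_mul (by norm_num), show (4 : ℝ) = 2 ^ 2 by norm_num,
      Real.sqrt_sq (by norm_num)]
  have hup : ((Metric.closedBall u ((θ + 2 * Real.sqrt εh / (4 * C)) * Λ)).ncard : ℝ)
      ≤ 4 * (εh * β * n) := by
    by_cases h4 : 4 * εh ≤ εlim
    · by_contra! hlt
      have : 4 * εh ∈ S := ⟨⟨by positivity, h4⟩, by rw [hsqrt]; linarith⟩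
      linarith [hle _ this]
    · have h1 : ((Metric.closedBall u ((θ + 2 * Real.sqrt εh / (4 * C)) * Λ)).ncard : ℝ)
          ≤ Fintype.card W := by
        rw [hcard]
        exact_mod_cast Finset.card_le_univ _
      have h2 : εlim * (β * n) ≤ 4 * εh * (β * n) := by
        push Not at h4
        gcongr
      linarith
  rw [hcard] at hlow hup
  have hsum : (Finset.univ.filter fun w => dist w u ≤ (θ + Real.sqrt εh / (4 * C)) * Λ).card
      + (Finset.univ.filter fun w => dist w u ∈ Set.Ioc
      ((θ + Real.sqrt εh / (4 * C)) * Λ) ((θ + 2 * Real.sqrt εh / (4 * C)) * Λ)).card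
      ≤ (Finset.univ.filter fun w =>
          dist w u ≤ (θ + 2 * Real.sqrt εh / (4 * C)) * Λ).card := by
    rw [← Finset.card_union_of_disjoint]
    · refine Finset.card_le_card fun w hw => ?_
      simp only [Finset.mem_union, Finset.mem_filter, Finset.mem_univ, true_and, Set.mem_Ioc]
        at hw ⊢
      rcases hw with hw | hw
      · refine hw.trans ?_
        have := Real.sqrt_nonneg εh
        gcongr
        linarith
      · exact hw.2
    · refine Finset.disjoint_left.2 fun w h1 h2 => ?_
      simp only [Finset.mem_filter, Finset.mem_univ, true_and, Set.mem_Ioc] at h1 h2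
      linarith [h2.1]
  have hsum' : ((Finset.univ.filter fun w =>
        dist w u ≤ (θ + Real.sqrt εh / (4 * C)) * Λ).card : ℝ)
      + ((Finset.univ.filter fun w => dist w u ∈ Set.Ioc
      ((θ + Real.sqrt εh / (4 * C)) * Λ) ((θ + 2 * Real.sqrt εh / (4 * C)) * Λ)).card : ℝ)
      ≤ ((Finset.univ.filter fun w =>
          dist w u ≤ (θ + 2 * Real.sqrt εh / (4 * C)) * Λ).card : ℝ) := by exact_mod_cast hsum
  linarith

/-- Claim 8 of the paper.  Let `(W,d)` be a finite
pseudometric space with `|W| ≥ 1`, `u ∈ W`, `n ≥ |W|`, `Λ̂ > 0`, `θ ≥ 0`,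
`β > 0`, `ε_lim ∈ (0,1]` with `|W| ≤ ε_lim·β·n`.  With `C = 8√(44e)` and
`ε̂ = sup{ε ∈ (0,ε_lim] : |B(u,(θ+√ε/(4C))·Λ̂)| ≥ ε·β·n}`, there is a radius
`r ∈ [(θ+(1/4+1/25)·√ε̂/C)·Λ̂, (θ+(1/2−1/25)·√ε̂/C)·Λ̂]` such that for every
`ε ∈ (0,32ε̂]`, the number of points `w` with `|d(u,w) − r| ≤ √ε·Λ̂/(150C)` is
at most `√(ε·ε̂/2)·n·β`. -/
theorem decompose_good_radius
    {W : Type*} [PseudoMetricSpace W] [Fintype W] (u : W)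
    (hW1 : 1 ≤ Fintype.card W)
    (n : ℕ) (hn : Fintype.card W ≤ n)
    (Λ : ℝ) (hΛ : 0 < Λ) (θ : ℝ) (hθ : 0 ≤ θ) (β : ℝ) (hβ : 0 < β)
    (εlim : ℝ) (hεlim : εlim ∈ Set.Ioc (0 : ℝ) 1)
    (hWn : (Fintype.card W : ℝ) ≤ εlim * β * (n : ℝ))
    (εh : ℝ)
    (hεh : εh = sSup {ε : ℝ | ε ∈ Set.Ioc (0 : ℝ) εlim ∧
      ε * β * (n : ℝ) ≤ (Set.ncard (Metric.closedBall u
        ((θ + Real.sqrt ε / (4 * decomposeConst)) * Λ)) : ℝ)}) :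
    ∃ r ∈ Set.Icc ((θ + (1/4 + 1/25) * Real.sqrt εh / decomposeConst) * Λ)
        ((θ + (1/2 - 1/25) * Real.sqrt εh / decomposeConst) * Λ),
      ∀ ε ∈ Set.Ioc (0 : ℝ) (32 * εh),
        (Set.ncard {w : W |
            |dist u w - r| ≤ Real.sqrt ε * Λ / (150 * decomposeConst)} : ℝ)
          ≤ Real.sqrt (ε * εh / 2) * (n : ℝ) * β := by
  classical
  have hC : 0 < decomposeConst := by unfold decomposeConst; positivity
  have hn0 : 0 < (n : ℝ) := by exact_mod_cast (by omega : 0 < n)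
  obtain ⟨hpos, hann⟩ := annulus_card_le u n Λ θ β εlim εh decomposeConst hΛ hC hθ hβ hW1 hn0
    hWn hεh
  clear hεh
  generalize decomposeConst = C at *
  set q := Real.sqrt εh with hq
  have hq0 : 0 < q := Real.sqrt_pos.2 hpos
  have hqq : q * q = εh := Real.mul_self_sqrt hpos.le
  set L := q * Λ / C with hL
  have hL0 : 0 < L := by positivity
  have hs2 : 0 < Real.sqrt 2 := by positivity
  have hs2sq : Real.sqrt 2 * Real.sqrt 2 = 2 := Real.mul_self_sqrt (by norm_num)
  have hs2lt : Real.sqrt 2 < 1.41422 := by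
    rw [Real.sqrt_lt' (by norm_num)]; norm_num
  have hlo : (θ + (1/4 + 1/25) * q / C) * Λ = θ * Λ + 29/100 * L := by rw [hL]; ring
  have hhi : (θ + (1/2 - 1/25) * q / C) * Λ = θ * Λ + 46/100 * L := by rw [hL]; ring
  have hlo' : (θ + q / (4 * C)) * Λ = θ * Λ + 1/4 * L := by rw [hL]; field_simp
  have hhi' : (θ + 2 * q / (4 * C)) * Λ = θ * Λ + 1/2 * L := by rw [hL]; field_simp; ring
  rw [hlo', hhi'] at hann
  rw [hlo, hhi]
  -- `R = 4√2 · L / 150` is the radius belonging to `ε = 32 ε̂`; it is less than `L / 25`.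
  obtain ⟨r, hr, hgood⟩ := exists_radius_card_le (fun w => dist u w)
    (θ * Λ + 29/100 * L) (θ * Λ + 46/100 * L) (4 * Real.sqrt 2 * L / 150)
    (150 * C * (q / Real.sqrt 2) * n * β / Λ) (3 * (εh * β * n)) 3.001
    (by linarith) (by positivity) (by norm_num)
    (by
      refine le_trans (Nat.cast_le.2 (Finset.card_le_card ?_)) hann
      intro w hw
      simp only [Finset.mem_filter, Finset.mem_univ, true_and, Set.mem_Icc, Set.mem_Ioc] at hw ⊢
      rw [dist_comm w u]
      have : Real.sqrt 2 * L < 1.41422 * L := by gcongr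
      constructor <;> linarith [hw.1, hw.2])
    (by
      have h1 : 150 * C * (q / Real.sqrt 2) * n * β / Λ *
          (θ * Λ + 46/100 * L - (θ * Λ + 29/100 * L))
          = 25.5 / Real.sqrt 2 * (εh * β * n) := by
        rw [hL, ← hqq]; field_simp; ring
      rw [h1, ← mul_assoc]
      have h2 : (2 * 3.001 * 3 : ℝ) < 25.5 / Real.sqrt 2 := by
        rw [lt_div_iff₀ hs2]; linarith
      gcongr)
  refine ⟨r, hr, fun ε hε => ?_⟩
  have hcard : Set.ncard {w : W | |dist u w - r| ≤ Real.sqrt ε * Λ / (150 * C)}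
      = (Finset.univ.filter fun w => |dist u w - r| ≤ Real.sqrt ε * Λ / (150 * C)).card := by
    rw [← Set.ncard_coe_finset]
    congr 1
    ext w
    simp
  have hε0 : 0 < Real.sqrt ε := Real.sqrt_pos.2 hε.1
  have hεle : Real.sqrt ε ≤ 4 * Real.sqrt 2 * q := by
    rw [Real.sqrt_le_left (by positivity)]
    have : (4 * Real.sqrt 2 * q) ^ 2 = 16 * (Real.sqrt 2 * Real.sqrt 2) * (q * q) := by ring
    rw [this, hs2sq, hqq]
    linarith [hε.2]
  have hR : Real.sqrt ε * Λ / (150 * C) ≤ 4 * Real.sqrt 2 * L / 150 := by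
    calc Real.sqrt ε * Λ / (150 * C) ≤ 4 * Real.sqrt 2 * q * Λ / (150 * C) := by gcongr
      _ = _ := by rw [hL]; field_simp
  rw [hcard]
  refine (hgood _ ⟨by positivity, hR⟩).trans (le_of_eq ?_)
  rw [Real.sqrt_div (mul_nonneg hε.1.le hpos.le), Real.sqrt_mul hε.1.le, ← hq]
  field_simp
end
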